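/- Let b ∈ L¹_loc(ℝⁿ), 1 < p ≤ q < ∞, α/n = 1/p − 1/q, and φ, ψ ∈ Φ_w(ℝⁿ) be such that φ⁻¹(x,t) ≈ t^{α/n}·ψ⁻¹(x,t). Let r ∈ (α/n, 1/p] and assume φ satisfies (A0), (A1), (A2), (aInc)_p and (aDec)_{1/r}. Then the fractional maximal commutator M_{b,α} is bounded from L^φ(ℝⁿ) to L^ψ(ℝⁿ) with ‖M_{b,α} f‖_{L^ψ(ℝⁿ)} ≤ C‖b‖_*‖f‖_{L^φ(ℝⁿ)} if and only if b ∈ BMO(ℝⁿ). -/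

import Mathlib

open MeasureTheory NNReal ENNReal Filter Set

noncomputable section

/-- `ℝⁿ` with the Euclidean structure. -/
abbrev RSp (n : ℕ) := EuclideanSpace ℝ (Fin n)

variable {n : ℕ}

/-- A cube in `ℝⁿ` with sides parallel to the coordinate axes,
with center `c` and side length `2r`. -/
structure Cube (n : ℕ) where
  c : RSp n
  r : ℝ
  r_pos : 0 < r

/-- The underlying set of a cube. -/
def Cube.set (Q : Cube n) : Set (RSp n) := {y | ∀ i, |y i - Q.c i| ≤ Q.r}

/-- A weak Φ-function on `Ω` (the class `Φ_w(Ω)`). -/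
structure IsWeakPhi (Ω : Set (RSp n)) (φ : RSp n → ℝ≥0 → ℝ≥0∞) : Prop where
  meas : ∀ f : RSp n → ℝ≥0, Measurable f →
    AEMeasurable (fun x => φ x (f x)) (volume.restrict Ω)
  mono : ∀ x ∈ Ω, Monotone (φ x)
  zero : ∀ x ∈ Ω, φ x 0 = 0
  lim_zero : ∀ x ∈ Ω, Tendsto (fun t : ℝ≥0 => φ x t) (nhdsWithin 0 (Set.Ioi 0)) (nhds 0)
  lim_top : ∀ x ∈ Ω, Tendsto (fun t : ℝ≥0 => φ x t) atTop (nhds ∞)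
  almost_inc : ∃ L : ℝ≥0, 1 ≤ L ∧ ∀ x ∈ Ω, ∀ s t : ℝ≥0, 0 < s → s < t →
    φ x s / (s : ℝ≥0∞) ≤ (L : ℝ≥0∞) * (φ x t / (t : ℝ≥0∞))

/-- A convex Φ-function on `Ω` (the class `Φ_c(Ω)`): a weak Φ-function which is
additionally convex and left-continuous in `t` for a.e. `x ∈ Ω`. -/
structure IsConvexPhi (Ω : Set (RSp n)) (φ : RSp n → ℝ≥0 → ℝ≥0∞)
    extends IsWeakPhi Ω φ : Prop where
  convex : ∀ᵐ x ∂(volume.restrict Ω), ∀ s t a b : ℝ≥0, a + b = 1 →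
    φ x (a * s + b * t) ≤ (a : ℝ≥0∞) * φ x s + (b : ℝ≥0∞) * φ x t
  left_cont : ∀ᵐ x ∂(volume.restrict Ω), ∀ t : ℝ≥0,
    Tendsto (φ x) (nhdsWithin t (Set.Iio t)) (nhds (φ x t))

/-- A strong Φ-function on `Ω` (the class `Φ_s(Ω)`): a weak Φ-function which is
additionally convex and continuous into `[0,∞]` for a.e. `x ∈ Ω`. -/
structure IsStrongPhi (Ω : Set (RSp n)) (φ : RSp n → ℝ≥0 → ℝ≥0∞)
    extends IsWeakPhi Ω φ : Prop where
  convex : ∀ᵐ x ∂(volume.restrict Ω), ∀ s t a b : ℝ≥0, a + b = 1 →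
    φ x (a * s + b * t) ≤ (a : ℝ≥0∞) * φ x s + (b : ℝ≥0∞) * φ x t
  cont : ∀ᵐ x ∂(volume.restrict Ω), Continuous (φ x)

/-- The generalized (left-)inverse `φ⁻¹(x,t) = inf {τ ≥ 0 : φ(x,τ) ≥ t}`. -/
def phiInv (φ : RSp n → ℝ≥0 → ℝ≥0∞) (x : RSp n) (t : ℝ≥0∞) : ℝ≥0∞ :=
  sInf ((fun s : ℝ≥0 => (s : ℝ≥0∞)) '' {s : ℝ≥0 | t ≤ φ x s})

/-- The condition `(aInc)_p` on `Ω`: `t ↦ φ(x,t)/t^p` is almost increasing, uniformly in `x`. -/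
def AInc (p : ℝ) (Ω : Set (RSp n)) (φ : RSp n → ℝ≥0 → ℝ≥0∞) : Prop :=
  ∃ L : ℝ≥0, 1 ≤ L ∧ ∀ x ∈ Ω, ∀ s t : ℝ≥0, 0 < s → s < t →
    φ x s / (s : ℝ≥0∞) ^ p ≤ (L : ℝ≥0∞) * (φ x t / (t : ℝ≥0∞) ^ p)

/-- The condition `(aDec)_q` on `Ω`: `t ↦ φ(x,t)/t^q` is almost decreasing, uniformly in `x`. -/
def ADec (q : ℝ) (Ω : Set (RSp n)) (φ : RSp n → ℝ≥0 → ℝ≥0∞) : Prop :=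
  ∃ L : ℝ≥0, 1 ≤ L ∧ ∀ x ∈ Ω, ∀ s t : ℝ≥0, 0 < s → s < t →
    φ x t / (t : ℝ≥0∞) ^ q ≤ (L : ℝ≥0∞) * (φ x s / (s : ℝ≥0∞) ^ q)

/-- The condition `(A0)` on `Ω`: `β ≤ φ⁻¹(x,1) ≤ 1/β` for a.e. `x ∈ Ω`. -/
def A0 (Ω : Set (RSp n)) (φ : RSp n → ℝ≥0 → ℝ≥0∞) : Prop :=
  ∃ β : ℝ≥0, 0 < β ∧ β ≤ 1 ∧ ∀ᵐ x ∂(volume.restrict Ω),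
    (β : ℝ≥0∞) ≤ phiInv φ x 1 ∧ phiInv φ x 1 ≤ (β : ℝ≥0∞)⁻¹

/-- The condition `(A1)` (on all of `ℝⁿ`). -/
def A1 (φ : RSp n → ℝ≥0 → ℝ≥0∞) : Prop :=
  ∃ β : ℝ≥0, 0 < β ∧ β < 1 ∧ ∀ Q : Cube n, volume Q.set ≤ 1 →
    ∀ᵐ x ∂(volume.restrict Q.set), ∀ᵐ y ∂(volume.restrict Q.set),
      ∀ t : ℝ≥0∞, 1 ≤ t → t ≤ (volume Q.set)⁻¹ →
        (β : ℝ≥0∞) * phiInv φ x t ≤ phiInv φ y t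

/-- The condition `(A2)` (on all of `ℝⁿ`). -/
def A2 (φ : RSp n → ℝ≥0 → ℝ≥0∞) : Prop :=
  ∃ φi : ℝ≥0 → ℝ≥0∞, IsWeakPhi Set.univ (fun _ : RSp n => φi) ∧
  ∃ h : RSp n → ℝ≥0∞, (∫⁻ x, h x) < ∞ ∧ (∃ M : ℝ≥0, ∀ᵐ x ∂(volume : Measure (RSp n)), h x ≤ M) ∧
  ∃ β : ℝ≥0, 0 < β ∧ β ≤ 1 ∧ ∃ s : ℝ≥0, 0 < s ∧
    ∀ᵐ x ∂(volume : Measure (RSp n)), ∀ t : ℝ≥0,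
      (φi t ≤ (s : ℝ≥0∞) → φ x (β * t) ≤ φi t + h x) ∧
      (φ x t ≤ (s : ℝ≥0∞) → φi (β * t) ≤ φ x t + h x)

/-- Membership in the generalized Orlicz space `L^φ(Ω)`. -/
def MemOrlicz (φ : RSp n → ℝ≥0 → ℝ≥0∞) (Ω : Set (RSp n)) (f : RSp n → ℝ) : Prop :=
  AEMeasurable f (volume.restrict Ω) ∧
  ∃ lam : ℝ≥0, 0 < lam ∧ (∫⁻ x in Ω, φ x (lam * ‖f x‖₊) ∂volume) < ∞

/-- The Luxemburg (quasi)norm of `L^φ(Ω)`. -/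
def orliczNorm (φ : RSp n → ℝ≥0 → ℝ≥0∞) (Ω : Set (RSp n)) (f : RSp n → ℝ) : ℝ≥0∞ :=
  sInf ((fun lam : ℝ≥0 => (lam : ℝ≥0∞)) ''
    {lam : ℝ≥0 | 0 < lam ∧ (∫⁻ x in Ω, φ x (‖f x‖₊ / lam) ∂volume) ≤ 1})

/-- The canonical extension of `φ(x,·)` to `[0,∞]`. -/
def phiE (φ : RSp n → ℝ≥0 → ℝ≥0∞) (x : RSp n) (t : ℝ≥0∞) : ℝ≥0∞ :=
  ⨆ (s : ℝ≥0) (_ : (s : ℝ≥0∞) ≤ t), φ x s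

/-- The Luxemburg (quasi)norm for `[0,∞]`-valued functions. -/
def orliczNormE (φ : RSp n → ℝ≥0 → ℝ≥0∞) (Ω : Set (RSp n)) (g : RSp n → ℝ≥0∞) : ℝ≥0∞ :=
  sInf ((fun lam : ℝ≥0 => (lam : ℝ≥0∞)) ''
    {lam : ℝ≥0 | 0 < lam ∧ (∫⁻ x in Ω, phiE φ x (g x / (lam : ℝ≥0∞)) ∂volume) ≤ 1})

/-- The average `b_Q` of `b` over the cube `Q`. -/
def cubeAvg (Q : Cube n) (b : RSp n → ℝ) : ℝ := ⨍ x in Q.set, b x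

/-- The BMO seminorm `‖b‖_*`. -/
def bmoNorm (b : RSp n → ℝ) : ℝ≥0∞ :=
  ⨆ Q : Cube n, (volume Q.set)⁻¹ * ∫⁻ x in Q.set, ‖b x - cubeAvg Q b‖₊

/-- `b ∈ BMO(ℝⁿ)`. -/
def IsBMO (b : RSp n → ℝ) : Prop := LocallyIntegrable b volume ∧ bmoNorm b < ∞

/-- The non-centred Hardy–Littlewood maximal function (over axes-parallel cubes). -/
def maximal (f : RSp n → ℝ) (x : RSp n) : ℝ≥0∞ :=
  ⨆ (Q : Cube n) (_ : x ∈ Q.set), (volume Q.set)⁻¹ * ∫⁻ y in Q.set, (‖f y‖₊ : ℝ≥0∞) ∂volume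

/-- The fractional maximal function `M_α`. -/
def fracMaximal (α : ℝ) (f : RSp n → ℝ) (x : RSp n) : ℝ≥0∞ :=
  ⨆ (Q : Cube n) (_ : x ∈ Q.set),
    volume Q.set ^ (α / (n : ℝ) - 1) * ∫⁻ y in Q.set, (‖f y‖₊ : ℝ≥0∞) ∂volume

/-- The maximal function restricted to subcubes of `Q₀`. -/
def restMaximal (Q₀ : Cube n) (f : RSp n → ℝ) (x : RSp n) : ℝ≥0∞ :=
  ⨆ (Q : Cube n) (_ : x ∈ Q.set) (_ : Q.set ⊆ Q₀.set),
    (volume Q.set)⁻¹ * ∫⁻ y in Q.set, (‖f y‖₊ : ℝ≥0∞) ∂volume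

/-- The fractional maximal function restricted to subcubes of `Q₀`. -/
def restFracMaximal (α : ℝ) (Q₀ : Cube n) (f : RSp n → ℝ) (x : RSp n) : ℝ≥0∞ :=
  ⨆ (Q : Cube n) (_ : x ∈ Q.set) (_ : Q.set ⊆ Q₀.set),
    volume Q.set ^ (α / (n : ℝ) - 1) * ∫⁻ y in Q.set, (‖f y‖₊ : ℝ≥0∞) ∂volume

/-- The sharp maximal function `M♯`. -/
def sharpMaximal (f : RSp n → ℝ) (x : RSp n) : ℝ≥0∞ :=
  ⨆ (Q : Cube n) (_ : x ∈ Q.set),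
    (volume Q.set)⁻¹ * ∫⁻ y in Q.set, (‖f y - ⨍ z in Q.set, f z‖₊ : ℝ≥0∞) ∂volume

/-- The maximal commutator `M_b`. -/
def maximalComm (b f : RSp n → ℝ) (x : RSp n) : ℝ≥0∞ :=
  ⨆ (Q : Cube n) (_ : x ∈ Q.set),
    (volume Q.set)⁻¹ * ∫⁻ y in Q.set, (‖b x - b y‖₊ : ℝ≥0∞) * (‖f y‖₊ : ℝ≥0∞) ∂volume

/-- The fractional maximal commutator `M_{b,α}`. -/
def fracMaximalComm (α : ℝ) (b f : RSp n → ℝ) (x : RSp n) : ℝ≥0∞ :=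
  ⨆ (Q : Cube n) (_ : x ∈ Q.set),
    volume Q.set ^ (α / (n : ℝ) - 1) *
      ∫⁻ y in Q.set, (‖b x - b y‖₊ : ℝ≥0∞) * (‖f y‖₊ : ℝ≥0∞) ∂volume

/-- The commutator `[M,b]f = M(bf) − b·Mf` of the maximal operator. -/
def maximalCommutator (b f : RSp n → ℝ) (x : RSp n) : ℝ :=
  (maximal (fun y => b y * f y) x).toReal - b x * (maximal f x).toReal

/-- The commutator `[M_α,b]f = M_α(bf) − b·M_α f` of the fractional maximal operator. -/
def fracMaximalCommutator (α : ℝ) (b f : RSp n → ℝ) (x : RSp n) : ℝ :=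
  (fracMaximal α (fun y => b y * f y) x).toReal - b x * (fracMaximal α f x).toReal

/-- The Riesz potential `I_α f`. -/
def riesz (α : ℝ) (f : RSp n → ℝ) (x : RSp n) : ℝ :=
  ∫ y, f y / dist x y ^ ((n : ℝ) - α)

/-- The commutator `[I_α, b]f = I_α(bf) − b·I_α f` of the Riesz potential. -/
def rieszCommutator (α : ℝ) (b f : RSp n → ℝ) (x : RSp n) : ℝ :=
  riesz α (fun y => b y * f y) x - b x * riesz α f x

/-- The operator `I_{b,α} f(x) = ∫ |b(x)−b(y)|·|x−y|^{α−n} f(y) dy`. -/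
def rieszAbs (α : ℝ) (b f : RSp n → ℝ) (x : RSp n) : ℝ :=
  ∫ y, |b x - b y| / dist x y ^ ((n : ℝ) - α) * f y

/-- Equivalence `φ ≃ ψ` of Φ-functions. -/
def PhiEquiv (φ ψ : RSp n → ℝ≥0 → ℝ≥0∞) : Prop :=
  ∃ L : ℝ≥0, 1 ≤ L ∧ ∀ x : RSp n, ∀ t : ℝ≥0, ψ x (t / L) ≤ φ x t ∧ φ x t ≤ ψ x (L * t)

/-- Weak equivalence `φ ∼ ψ` of Φ-functions. -/
def PhiWeakEquiv (φ ψ : RSp n → ℝ≥0 → ℝ≥0∞) : Prop :=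
  ∃ L : ℝ≥0, 1 ≤ L ∧ ∃ h : RSp n → ℝ≥0∞, (∫⁻ x, h x) < ∞ ∧
    ∀ᵐ x ∂(volume : Measure (RSp n)), ∀ t : ℝ≥0,
      ψ x t ≤ φ x (L * t) + h x ∧ φ x t ≤ ψ x (L * t) + h x

/-- The relation `φ⁻¹(x,t) ≈ t^{α/n}·ψ⁻¹(x,t)` with constants independent of `x` and `t > 0`. -/
def FracInvRel (α : ℝ) (φ ψ : RSp n → ℝ≥0 → ℝ≥0∞) : Prop :=
  ∃ c₁ c₂ : ℝ≥0, 0 < c₁ ∧ ∀ x : RSp n, ∀ t : ℝ≥0, 0 < t →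
    (c₁ : ℝ≥0∞) * ((t : ℝ≥0∞) ^ (α / (n : ℝ)) * phiInv ψ x t) ≤ phiInv φ x t ∧
    phiInv φ x t ≤ (c₂ : ℝ≥0∞) * ((t : ℝ≥0∞) ^ (α / (n : ℝ)) * phiInv ψ x t)

/-- The characteristic function of a cube, as a real-valued function. -/
def cubeIndicator (Q : Cube n) : RSp n → ℝ := Q.set.indicator 1

end

/-!
Sufficiency. The growth bounds on `φ⁻¹(x, ·)` coming from `(aInc)_p` and `(aDec)_{1/r}`, together
with `(A1)` and `(A2)`, make `φ⁻¹(x, ·)` and `φ⁻¹(z, ·)` comparable for `x`, `z` in a cube `Q`, at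
all levels `t ≲ 1/|Q|` that dominate an integrable error `H`. Let `∫ φ(x, |f|) ≤ 1` and put
`G = (φ(·, |f|) + H)^{1/√p}`. Since `1/p = 1/√p · 1/√p`, Hölder's inequality with exponent `√p`
leaves room for John–Nirenberg to absorb the factor `|b - b_Q|`, and on the cube `Q ∋ x` the
quantity in `M_{b,α} f(x)` is at most a multiple of `ψ⁻¹(x, λ)` with
`λ = (1 + |b(x) - b_Q|)^{1/(r - α/n)} (⨍_Q G)^{√p}`. A maximal inequality weighted by powers of the
oscillation, proved by a Vitali covering at each dyadic level of `⨍_Q G`, bounds the supremum of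
`λ` over `Q` by an integrable function of `x`.

Necessity. Test on `f = w 1_Q` with `w ≈ φ⁻¹(z, t)` and `t ≈ 1/|Q|`, whose norm is bounded. On `Q`,
`M_{b,α} f(x) ≥ |Q|^{α/n} w ⨍_Q |b(x) - b|`, and `|Q|^{α/n} w ≈ ψ⁻¹(x, t)`, so boundedness of
`M_{b,α}` gives a point `x ∈ Q` at which `⨍_Q |b(x) - b|` is bounded independently of `Q`.
-/

/-! ### Cubes -/

section Cubes

variable {n : ℕ}

theorem Cube.set_eq_preimage_closedBall (Q : Cube n) :
    Q.set = PiLp.homeomorph 2 (fun _ : Fin n => ℝ) ⁻¹' Metric.closedBall (WithLp.ofLp Q.c) Q.r := by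
  ext y
  simp only [Cube.set, mem_ofPred_eq, mem_preimage, Metric.mem_closedBall,
    dist_pi_le_iff Q.r_pos.le, Real.dist_eq]
  rfl

theorem Cube.isCompact_set (Q : Cube n) : IsCompact Q.set := by
  rw [Q.set_eq_preimage_closedBall, Homeomorph.isCompact_preimage]
  exact isCompact_closedBall _ _

theorem Cube.measurableSet_set (Q : Cube n) : MeasurableSet Q.set :=
  Q.isCompact_set.measurableSet

theorem Cube.center_mem_set (Q : Cube n) : Q.c ∈ Q.set := fun i => by simpa using Q.r_pos.le

theorem Cube.volume_set (Q : Cube n) : volume Q.set = ENNReal.ofReal (2 * Q.r) ^ n := by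
  have hball := (PiLp.volume_preserving_ofLp (Fin n)).measure_preimage
    (Metric.isClosed_closedBall (x := WithLp.ofLp Q.c) (ε := Q.r)).nullMeasurableSet
  rw [Real.volume_pi_closedBall _ Q.r_pos.le, Fintype.card_fin,
    ENNReal.ofReal_pow (by linarith [Q.r_pos])] at hball
  rw [Q.set_eq_preimage_closedBall, ← hball]
  rfl

theorem Cube.volume_set_ne_zero (Q : Cube n) : volume Q.set ≠ 0 := by
  simp [Q.volume_set, Q.r_pos]

theorem Cube.volume_set_ne_top (Q : Cube n) : volume Q.set ≠ ∞ :=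
  Q.isCompact_set.measure_ne_top

theorem Cube.mul_volume_set_le_iff (Q : Cube n) {a b : ℝ≥0∞} :
    a * volume Q.set ≤ b * volume Q.set ↔ a ≤ b :=
  ENNReal.mul_le_mul_iff_left Q.volume_set_ne_zero Q.volume_set_ne_top

theorem Cube.volume_set_mono_radius {Q Q' : Cube n} (h : Q.r ≤ Q'.r) :
    volume Q.set ≤ volume Q'.set := by
  rw [Q.volume_set, Q'.volume_set]
  gcongr

theorem Cube.radius_le_of_volume_set_le (hn : n ≠ 0) (Q : Cube n) {V : ℝ≥0∞} (hV : V ≠ ∞)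
    (h : volume Q.set ≤ V) : Q.r ≤ max 1 V.toReal := by
  rcases le_total (2 * Q.r) 1 with hr | hr
  · exact le_max_of_le_left (by linarith [Q.r_pos])
  · refine le_max_of_le_right ?_
    have hpow : 2 * Q.r ≤ (2 * Q.r) ^ n := le_self_pow₀ hr hn
    rw [Q.volume_set, ← ENNReal.ofReal_pow (by linarith),
      ENNReal.ofReal_le_iff_le_toReal hV] at h
    linarith [Q.r_pos]

/-- The cube with the same center as `Q`, expanded by the integer factor `k`. -/
@[simps]
def Cube.dilate (Q : Cube n) (k : ℕ) [NeZero k] : Cube n :=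
  ⟨Q.c, k * Q.r, mul_pos (Nat.cast_pos.2 (NeZero.pos k)) Q.r_pos⟩

theorem Cube.volume_dilate (Q : Cube n) (k : ℕ) [NeZero k] :
    volume (Q.dilate k).set = (k : ℝ≥0∞) ^ n * volume Q.set := by
  rw [Cube.volume_set, Cube.volume_set, ← mul_pow, ← ENNReal.ofReal_natCast k,
    ← ENNReal.ofReal_mul k.cast_nonneg, Cube.dilate_r]
  ring_nf

theorem Cube.set_subset_dilate (Q : Cube n) (k : ℕ) [NeZero k] : Q.set ⊆ (Q.dilate k).set := by
  have hk : (1 : ℝ) ≤ k := Nat.one_le_cast.2 (NeZero.one_le)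
  exact fun y hy i => (hy i).trans (le_mul_of_one_le_left Q.r_pos.le hk)

theorem Cube.set_subset_dilate_of_inter_nonempty {Q Q' : Cube n} {k : ℕ} [NeZero k]
    (h : (Q.set ∩ Q'.set).Nonempty) (hr : 2 * Q.r + Q'.r ≤ k * Q'.r) :
    Q.set ⊆ (Q'.dilate k).set := by
  obtain ⟨z, hz, hz'⟩ := h
  intro y hy i
  calc |y i - Q'.c i| = |(y i - Q.c i) - (z i - Q.c i) + (z i - Q'.c i)| := by ring_nf
    _ ≤ |y i - Q.c i| + |z i - Q.c i| + |z i - Q'.c i| :=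
      (abs_add_le _ _).trans (add_le_add_left (abs_sub _ _) _)
    _ ≤ k * Q'.r := by linarith [hy i, hz i, hz' i]

theorem Cube.exists_countable_disjoint_covering (t : Set (Cube n)) (R : ℝ)
    (hR : ∀ Q ∈ t, Q.r ≤ R) :
    ∃ u ⊆ t, u.Countable ∧ u.PairwiseDisjoint Cube.set ∧
      ∀ Q ∈ t, ∃ Q' ∈ u, Q.set ⊆ (Q'.dilate 5).set ∧ Q.r ≤ 2 * Q'.r := by
  obtain ⟨u, hut, hdisj, hcover⟩ := Vitali.exists_disjoint_subfamily_covering_enlargement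
    Cube.set t Cube.r 2 one_lt_two (fun Q _ => Q.r_pos.le) R hR (fun Q _ => ⟨Q.c, Q.center_mem_set⟩)
  refine ⟨u, hut, ?_, hdisj, fun Q hQ => ?_⟩
  · have hcount := Measure.countable_meas_pos_of_disjoint_iUnion (μ := (volume : Measure (RSp n)))
      (fun Q : u => Q.1.measurableSet_set) hdisj.subtype
    simpa [pos_iff_ne_zero, Cube.volume_set_ne_zero, countable_univ_iff, countable_coe_iff]
      using hcount
  · obtain ⟨Q', hQ', hmeet, hr⟩ := hcover Q hQ
    exact ⟨Q', hQ', Cube.set_subset_dilate_of_inter_nonempty hmeet (by push_cast; linarith), hr⟩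

/-- The cube with rational center and rational radius; these form a countable family. -/
def ratCube (c : Fin n → ℚ) (r : {r : ℚ // 0 < r}) : Cube n :=
  ⟨WithLp.toLp 2 fun i => (c i : ℝ), (r : ℚ), by exact_mod_cast r.2⟩

theorem Cube.exists_subset_ratCube (Q : Cube n) :
    ∃ (c : Fin n → ℚ) (r : {r : ℚ // 0 < r}), Q.set ⊆ (ratCube c r).set ∧
      volume (ratCube c r).set ≤ 2 ^ n * volume Q.set := by
  have hr := Q.r_pos
  obtain ⟨r, hr₁, hr₂⟩ := exists_rat_btwn (show 3 / 2 * Q.r < 2 * Q.r by linarith)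
  have hr₀ : (0 : ℝ) < r := by linarith
  choose c hc₁ hc₂ using fun i =>
    exists_rat_btwn (show Q.c i - Q.r / 4 < Q.c i + Q.r / 4 by linarith)
  refine ⟨c, ⟨r, by exact_mod_cast hr₀⟩, fun y hy i => ?_, ?_⟩
  · have hyi := abs_le.1 (hy i)
    simp only [ratCube, abs_le]
    constructor <;> linarith [hc₁ i, hc₂ i]
  · refine (Cube.volume_set_mono_radius (Q' := Q.dilate 2) ?_).trans_eq ?_
    · simpa [ratCube] using hr₂.le
    · exact_mod_cast Q.volume_dilate 2

end Cubes

/-! ### Averages over cubes and mean oscillation -/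

section MeanOscillation

variable {n : ℕ} {b : RSp n → ℝ}

theorem Cube.integrableOn_set (hb : LocallyIntegrable b volume) (Q : Cube n) :
    IntegrableOn b Q.set :=
  hb.integrableOn_isCompact Q.isCompact_set

instance Cube.isFiniteMeasure_restrict (Q : Cube n) :
    IsFiniteMeasure (volume.restrict Q.set) :=
  MeasureTheory.isFiniteMeasure_restrict.2 Q.volume_set_ne_top

instance Cube.neZero_restrict (Q : Cube n) : NeZero (volume.restrict Q.set) :=
  ⟨Measure.restrict_eq_zero.not.2 Q.volume_set_ne_zero⟩

theorem Cube.volume_mul_laverage (Q : Cube n) (f : RSp n → ℝ≥0∞) :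
    volume Q.set * ⨍⁻ y in Q.set, f y ∂volume = ∫⁻ y in Q.set, f y :=
  measure_mul_setLAverage f Q.volume_set_ne_top

theorem Cube.laverage_le_of_subset {Q Q' : Cube n} {C : ℝ≥0∞} (h : Q.set ⊆ Q'.set)
    (hC : volume Q'.set ≤ C * volume Q.set) (f : RSp n → ℝ≥0∞) :
    ⨍⁻ y in Q.set, f y ∂volume ≤ C * ⨍⁻ y in Q'.set, f y ∂volume := by
  rw [← Q.mul_volume_set_le_iff, mul_comm, Q.volume_mul_laverage, mul_right_comm]
  calc ∫⁻ y in Q.set, f y ≤ ∫⁻ y in Q'.set, f y := lintegral_mono_set h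
    _ = volume Q'.set * ⨍⁻ y in Q'.set, f y ∂volume := (Q'.volume_mul_laverage f).symm
    _ ≤ C * volume Q.set * ⨍⁻ y in Q'.set, f y ∂volume := by gcongr

theorem cubeAvg_const_mul (Q : Cube n) (c : ℝ) (b : RSp n → ℝ) :
    cubeAvg Q (fun x => c * b x) = c * cubeAvg Q b :=
  integral_const_mul c b

theorem laverage_enorm_sub_cubeAvg_le_bmoNorm (b : RSp n → ℝ) (Q : Cube n) :
    ⨍⁻ x in Q.set, ‖b x - cubeAvg Q b‖ₑ ∂volume ≤ bmoNorm b := by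
  rw [setLAverage_eq, ENNReal.div_eq_inv_mul]
  exact le_iSup (fun Q : Cube n => (volume Q.set)⁻¹ * ∫⁻ x in Q.set, ‖b x - cubeAvg Q b‖ₑ) Q

theorem bmoNorm_const_mul (c : ℝ) (b : RSp n → ℝ) :
    bmoNorm (fun x => c * b x) = ‖c‖ₑ * bmoNorm b := by
  simp_rw [bmoNorm, cubeAvg_const_mul, ← mul_sub, ENNReal.mul_iSup, ← enorm_eq_nnnorm, enorm_mul,
    lintegral_const_mul' _ _ enorm_ne_top, mul_left_comm]

theorem enorm_cubeAvg_sub_le (hb : LocallyIntegrable b volume) (Q : Cube n) (c : ℝ) :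
    ‖cubeAvg Q b - c‖ₑ ≤ ⨍⁻ x in Q.set, ‖b x - c‖ₑ ∂volume := by
  have hsub : cubeAvg Q b - c = ⨍ x in Q.set, (b x - c) :=
    calc cubeAvg Q b - c = (⨍ x in Q.set, b x) - ⨍ _ in Q.set, c := by rw [average_const, cubeAvg]
      _ = ⨍ x in Q.set, (b x - c) :=
        (integral_sub (Q.integrableOn_set hb).to_average (integrable_const c).to_average).symm
  rw [hsub]
  exact enorm_integral_le_lintegral_enorm _

theorem enorm_cubeAvg_sub_cubeAvg_le (hb : LocallyIntegrable b volume) {Q Q' : Cube n} {C : ℝ≥0∞}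
    (h : Q.set ⊆ Q'.set) (hC : volume Q'.set ≤ C * volume Q.set) :
    ‖cubeAvg Q b - cubeAvg Q' b‖ₑ ≤ C * bmoNorm b :=
  (enorm_cubeAvg_sub_le hb Q _).trans <| (Cube.laverage_le_of_subset h hC _).trans <|
    mul_le_mul_right (laverage_enorm_sub_cubeAvg_le_bmoNorm b Q') C

theorem Cube.laverage_enorm_sub_le (Q : Cube n) (b : RSp n → ℝ) (c c' : ℝ) :
    ⨍⁻ x in Q.set, ‖b x - c‖ₑ ∂volume ≤ (⨍⁻ x in Q.set, ‖b x - c'‖ₑ ∂volume) + ‖c' - c‖ₑ := by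
  calc ⨍⁻ x in Q.set, ‖b x - c‖ₑ ∂volume
    _ ≤ ⨍⁻ x in Q.set, (‖b x - c'‖ₑ + ‖c' - c‖ₑ) ∂volume :=
      lintegral_mono fun x => by
        rw [← sub_add_sub_cancel (b x) c']
        exact enorm_add_le _ _
    _ = (⨍⁻ x in Q.set, ‖b x - c'‖ₑ ∂volume) + ‖c' - c‖ₑ := by
      rw [laverage_eq', lintegral_add_right _ measurable_const, ← laverage_eq', ← laverage_eq',
        laverage_const]

theorem bmoNorm_le_two_mul (hb : LocallyIntegrable b volume) {Λ : ℝ≥0∞}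
    (h : ∀ Q : Cube n, ∃ c : ℝ, ⨍⁻ y in Q.set, ‖b y - c‖ₑ ∂volume ≤ Λ) : bmoNorm b ≤ 2 * Λ := by
  refine iSup_le fun Q => ?_
  obtain ⟨c, hc⟩ := h Q
  rw [← ENNReal.div_eq_inv_mul, ← setLAverage_eq, two_mul]
  refine (Q.laverage_enorm_sub_le b _ c).trans (add_le_add hc ?_)
  rw [← enorm_neg, neg_sub]
  exact (enorm_cubeAvg_sub_le hb Q c).trans hc

theorem laverage_dilate_enorm_sub_cubeAvg_le (hb : LocallyIntegrable b volume) (Q : Cube n)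
    (k : ℕ) [NeZero k] :
    ⨍⁻ x in (Q.dilate k).set, ‖b x - cubeAvg Q b‖ₑ ∂volume ≤ 2 * (k : ℝ≥0∞) ^ n * bmoNorm b := by
  have hk : (1 : ℝ≥0∞) ≤ (k : ℝ≥0∞) ^ n := one_le_pow₀ (Nat.one_le_cast.2 NeZero.one_le)
  have havg : ‖cubeAvg (Q.dilate k) b - cubeAvg Q b‖ₑ ≤ (k : ℝ≥0∞) ^ n * bmoNorm b := by
    rw [← enorm_neg, neg_sub]
    exact enorm_cubeAvg_sub_cubeAvg_le hb (Q.set_subset_dilate k) (Q.volume_dilate k).le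
  calc ⨍⁻ x in (Q.dilate k).set, ‖b x - cubeAvg Q b‖ₑ ∂volume
    _ ≤ (⨍⁻ x in (Q.dilate k).set, ‖b x - cubeAvg (Q.dilate k) b‖ₑ ∂volume) +
        ‖cubeAvg (Q.dilate k) b - cubeAvg Q b‖ₑ := Cube.laverage_enorm_sub_le _ b _ _
    _ ≤ (k : ℝ≥0∞) ^ n * bmoNorm b + (k : ℝ≥0∞) ^ n * bmoNorm b :=
        add_le_add ((laverage_enorm_sub_cubeAvg_le_bmoNorm b _).trans
          (le_mul_of_one_le_left zero_le hk)) havg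
    _ = 2 * (k : ℝ≥0∞) ^ n * bmoNorm b := by ring

theorem cubeAvg_eq_average_closedBall (Q : Cube n) (b : RSp n → ℝ) :
    cubeAvg Q b = ⨍ z in Metric.closedBall (WithLp.ofLp Q.c) Q.r, b (WithLp.toLp 2 z) := by
  have hmp := PiLp.volume_preserving_toLp (Fin n)
  have hpre : WithLp.toLp 2 ⁻¹' Q.set = Metric.closedBall (WithLp.ofLp Q.c) Q.r := by
    rw [Q.set_eq_preimage_closedBall]
    rfl
  rw [cubeAvg, setAverage_eq, setAverage_eq, ← hpre,
    hmp.setIntegral_preimage_emb (MeasurableEquiv.toLp 2 _).measurableEmbedding, measureReal_def,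
    measureReal_def, hmp.measure_preimage Q.measurableSet_set.nullMeasurableSet]

theorem ae_tendsto_cubeAvg (hb : LocallyIntegrable b volume) :
    ∀ᵐ x, Tendsto (fun k : ℕ => cubeAvg ⟨x, 1 / (k + 1), Nat.one_div_pos_of_nat⟩ b) atTop
      (nhds (b x)) := by
  have hb' : LocallyIntegrable (fun z => b (WithLp.toLp 2 z)) volume :=
    locallyIntegrable_iff.2 fun k hk =>
      ((PiLp.volume_preserving_toLp (Fin n)).integrableOn_image
        (MeasurableEquiv.toLp 2 _).measurableEmbedding).1
        (hb.integrableOn_isCompact (hk.image (PiLp.continuous_toLp 2 _)))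
  filter_upwards [(PiLp.volume_preserving_ofLp (Fin n)).quasiMeasurePreserving.ae
    (IsUnifLocDoublingMeasure.ae_tendsto_average volume hb' 1)] with x hx
  have hpos (k : ℕ) : (0 : ℝ) < 1 / (k + 1) := Nat.one_div_pos_of_nat
  simp_rw [cubeAvg_eq_average_closedBall]
  refine hx (fun _ => WithLp.ofLp x) (fun k : ℕ => (1 / (k + 1) : ℝ))
    (tendsto_nhdsWithin_iff.2 ⟨tendsto_one_div_add_atTop_nhds_zero_nat, .of_forall hpos⟩)
    (.of_forall fun k => Metric.mem_closedBall_self ?_)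
  simpa using (hpos k).le

end MeanOscillation

/-! ### The John–Nirenberg inequality -/

section JohnNirenberg

variable {n : ℕ} {b : RSp n → ℝ}

/-- The local oscillation of `b` at `x` relative to `Q₀`: how far the averages of `b` over the cubes
through `x` of radius at most that of `Q₀` can deviate from the average over `Q₀`. -/
noncomputable def localOsc (b : RSp n → ℝ) (Q₀ : Cube n) (x : RSp n) : ℝ≥0∞ :=
  ⨆ (Q : Cube n) (_ : x ∈ Q.set) (_ : Q.r ≤ Q₀.r), ‖cubeAvg Q b - cubeAvg Q₀ b‖ₑ

theorem enorm_cubeAvg_sub_le_localOsc {Q₀ Q : Cube n} {x : RSp n} (hx : x ∈ Q.set)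
    (hr : Q.r ≤ Q₀.r) : ‖cubeAvg Q b - cubeAvg Q₀ b‖ₑ ≤ localOsc b Q₀ x :=
  le_iSup₂_of_le Q hx (le_iSup_of_le hr le_rfl)

theorem lt_localOsc_iff {l : ℝ≥0∞} {Q₀ : Cube n} {x : RSp n} :
    l < localOsc b Q₀ x ↔
      ∃ Q : Cube n, x ∈ Q.set ∧ Q.r ≤ Q₀.r ∧ l < ‖cubeAvg Q b - cubeAvg Q₀ b‖ₑ := by
  simp only [localOsc, lt_iSup_iff, exists_prop]

theorem ae_enorm_sub_cubeAvg_le_localOsc (hb : LocallyIntegrable b volume) :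
    ∀ᵐ x, ∀ Q₀ : Cube n, ‖b x - cubeAvg Q₀ b‖ₑ ≤ localOsc b Q₀ x := by
  filter_upwards [ae_tendsto_cubeAvg hb] with x hx Q₀
  refine le_of_tendsto (hx.sub_const (cubeAvg Q₀ b)).enorm ?_
  filter_upwards [tendsto_one_div_add_atTop_nhds_zero_nat.eventually_le_const Q₀.r_pos] with k hk
  exact enorm_cubeAvg_sub_le_localOsc (Cube.center_mem_set _) hk

theorem Cube.exists_mem_forall_radius_le (t : Set (Cube n)) (ht : t.Nonempty) (R : ℝ)
    (hR : ∀ Q ∈ t, Q.r ≤ R) : ∃ Q ∈ t, ∀ Q' ∈ t, Q'.r ≤ 2 * Q.r := by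
  obtain ⟨Q₀, hQ₀⟩ := ht
  have hbdd : BddAbove (Cube.r '' t) := ⟨R, forall_mem_image.2 hR⟩
  have hpos : 0 < sSup (Cube.r '' t) :=
    Q₀.r_pos.trans_le (le_csSup hbdd (mem_image_of_mem _ hQ₀))
  obtain ⟨_, ⟨Q, hQ, rfl⟩, hlt⟩ :=
    exists_lt_of_lt_csSup (Nonempty.image _ ⟨Q₀, hQ₀⟩) (half_lt_self hpos)
  exact ⟨Q, hQ, fun Q' hQ' => by linarith [le_csSup hbdd (mem_image_of_mem _ hQ')]⟩

theorem Cube.exists_countable_disjoint_maximal_covering (t : Set (Cube n)) (R : ℝ)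
    (hR : ∀ Q ∈ t, Q.r ≤ R) :
    ∃ u ⊆ t, u.Countable ∧ u.PairwiseDisjoint Cube.set ∧ ∀ Q ∈ t, ∀ x ∈ Q.set,
      ∃ Q₁ ∈ u, x ∈ (Q₁.dilate 5).set ∧ ∀ Q' ∈ t, x ∈ Q'.set → Q'.r ≤ 4 * Q₁.r := by
  obtain ⟨u, hu, hcount, hdisj, hcover⟩ := Cube.exists_countable_disjoint_covering
    {Q ∈ t | ∃ x ∈ Q.set, ∀ Q' ∈ t, x ∈ Q'.set → Q'.r ≤ 2 * Q.r} R (fun Q hQ => hR Q hQ.1)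
  refine ⟨u, fun Q hQ => (hu hQ).1, hcount, hdisj, fun Q hQ x hx => ?_⟩
  obtain ⟨Qx, ⟨hQx, hxQx⟩, hmax⟩ := Cube.exists_mem_forall_radius_le
    {Q ∈ t | x ∈ Q.set} ⟨Q, hQ, hx⟩ R (fun Q hQ => hR Q hQ.1)
  obtain ⟨Q₁, hQ₁, hsub, hr⟩ := hcover Qx ⟨hQx, x, hxQx, fun Q' hQ' hx' => hmax Q' ⟨hQ', hx'⟩⟩
  exact ⟨Q₁, hQ₁, hsub hxQx, fun Q hQ hxQ => by linarith [hmax Q ⟨hQ, hxQ⟩]⟩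

/-- The cubes meeting `Q₀`, no larger than `Q₀`, on which the average of `b` deviates from the
average over `Q₀` by more than `l`. -/
def deviatingCubes (b : RSp n → ℝ) (Q₀ : Cube n) (l : ℝ≥0∞) : Set (Cube n) :=
  {Q | (Q.set ∩ Q₀.set).Nonempty ∧ Q.r ≤ Q₀.r ∧ l < ‖cubeAvg Q b - cubeAvg Q₀ b‖ₑ}

theorem mul_tsum_volume_deviatingCubes_le (hb : LocallyIntegrable b volume) (hb₁ : bmoNorm b ≤ 1)
    {Q₀ : Cube n} {l : ℝ≥0∞} {u : Set (Cube n)} (hu : u ⊆ deviatingCubes b Q₀ l)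
    (hcount : u.Countable) (hdisj : u.PairwiseDisjoint Cube.set) :
    l * ∑' Q : u, volume Q.1.set ≤ 2 * 9 ^ n * volume Q₀.set := by
  have hsub (Q : Cube n) (hQ : Q ∈ u) : Q.set ⊆ (Q₀.dilate 3).set :=
    Cube.set_subset_dilate_of_inter_nonempty (hu hQ).1 (by push_cast; linarith [(hu hQ).2.1])
  calc l * ∑' Q : u, volume Q.1.set = ∑' Q : u, l * volume Q.1.set := ENNReal.tsum_mul_left.symm
    _ ≤ ∑' Q : u, ∫⁻ x in Q.1.set, ‖b x - cubeAvg Q₀ b‖ₑ := by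
        refine ENNReal.tsum_le_tsum fun Q => ?_
        rw [← Q.1.volume_mul_laverage, mul_comm]
        gcongr
        exact (hu Q.2).2.2.le.trans (enorm_cubeAvg_sub_le hb Q.1 _)
    _ = ∫⁻ x in ⋃ Q ∈ u, Q.set, ‖b x - cubeAvg Q₀ b‖ₑ :=
        (lintegral_biUnion hcount (fun Q _ => Q.measurableSet_set) hdisj _).symm
    _ ≤ ∫⁻ x in (Q₀.dilate 3).set, ‖b x - cubeAvg Q₀ b‖ₑ :=
        lintegral_mono_set (iUnion₂_subset hsub)
    _ ≤ (3 : ℕ) ^ n * volume Q₀.set * (2 * (3 : ℕ) ^ n * 1) := by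
        rw [← Cube.volume_mul_laverage, Q₀.volume_dilate 3]
        gcongr
        exact (laverage_dilate_enorm_sub_cubeAvg_le hb Q₀ 3).trans (by gcongr)
    _ = 2 * 9 ^ n * volume Q₀.set := by
        rw [show (9 : ℝ≥0∞) = (3 : ℕ) * (3 : ℕ) by norm_num, mul_pow]
        ring

/-- The increment of the level in one step of the John–Nirenberg iteration. -/
def johnNirenbergStep (n : ℕ) : ℝ≥0 := 4 * 45 ^ n

theorem tsum_volume_dilate_deviatingCubes_le (hb : LocallyIntegrable b volume)
    (hb₁ : bmoNorm b ≤ 1) {Q₀ : Cube n} {u : Set (Cube n)}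
    (hu : u ⊆ deviatingCubes b Q₀ (johnNirenbergStep n))
    (hcount : u.Countable) (hdisj : u.PairwiseDisjoint Cube.set) :
    ∑' Q : u, volume (Q.1.dilate 5).set ≤ 2⁻¹ * volume Q₀.set := by
  have hstep : (johnNirenbergStep n : ℝ≥0∞) = 4 * 9 ^ n * 5 ^ n := by
    rw [johnNirenbergStep, mul_assoc, ← mul_pow]
    norm_num
  have hhalf : (2 * 9 ^ n : ℝ≥0∞) = 4 * 9 ^ n * 2⁻¹ := by
    rw [mul_right_comm, show (4 : ℝ≥0∞) = 2 * 2 by norm_num,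
      ENNReal.mul_inv_cancel_right two_ne_zero ofNat_ne_top]
  have hpack := mul_tsum_volume_deviatingCubes_le hb hb₁ hu hcount hdisj
  rw [hstep, hhalf, mul_assoc (4 * 9 ^ n : ℝ≥0∞), mul_assoc (4 * 9 ^ n : ℝ≥0∞),
    ENNReal.mul_le_mul_iff_right (by simp) (by finiteness)] at hpack
  simpa only [Cube.volume_dilate, ENNReal.tsum_mul_left, Nat.cast_ofNat] using hpack

/-- Either the dilated cube competes with `Q₁` for maximality, or it is comparable to `Q₀`. -/
theorem enorm_cubeAvg_dilate_sub_le_johnNirenbergStep (hb : LocallyIntegrable b volume)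
    (hb₁ : bmoNorm b ≤ 1) {Q₀ Q₁ : Cube n} (hr : Q₁.r ≤ Q₀.r) {x : RSp n} (hx₀ : x ∈ Q₀.set)
    (hx₁ : x ∈ (Q₁.dilate 5).set)
    (hmax : ∀ Q ∈ deviatingCubes b Q₀ (johnNirenbergStep n), x ∈ Q.set → Q.r ≤ 4 * Q₁.r) :
    ‖cubeAvg (Q₁.dilate 5) b - cubeAvg Q₀ b‖ₑ ≤ johnNirenbergStep n := by
  have hr₁ := Q₁.r_pos
  rcases le_or_gt (Q₁.dilate 5).r Q₀.r with hsmall | hlarge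
  · by_contra! hdev
    have := hmax _ ⟨⟨x, hx₁, hx₀⟩, hsmall, hdev⟩ hx₁
    simp only [Cube.dilate_r, Nat.cast_ofNat] at this
    linarith
  · have hvol := (Q₀.volume_dilate 11).le
    have hsub : (Q₁.dilate 5).set ⊆ (Q₀.dilate 11).set :=
      Cube.set_subset_dilate_of_inter_nonempty ⟨x, hx₁, hx₀⟩
        (by simp only [Cube.dilate_r, Nat.cast_ofNat]; linarith)
    have havg₁ := enorm_cubeAvg_sub_cubeAvg_le hb hsub
      (hvol.trans (mul_le_mul_right (Cube.volume_set_mono_radius hlarge.le) _))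
    have havg₀ := enorm_cubeAvg_sub_cubeAvg_le hb (Q₀.set_subset_dilate 11) hvol
    rw [← enorm_neg, neg_sub] at havg₀
    calc ‖cubeAvg (Q₁.dilate 5) b - cubeAvg Q₀ b‖ₑ
        ≤ ‖cubeAvg (Q₁.dilate 5) b - cubeAvg (Q₀.dilate 11) b‖ₑ +
          ‖cubeAvg (Q₀.dilate 11) b - cubeAvg Q₀ b‖ₑ := by
          rw [← sub_add_sub_cancel _ (cubeAvg (Q₀.dilate 11) b)]
          exact enorm_add_le _ _
      _ ≤ (11 : ℕ) ^ n * 1 + (11 : ℕ) ^ n * 1 :=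
          add_le_add (havg₁.trans (by gcongr)) (havg₀.trans (by gcongr))
      _ ≤ 2 * 45 ^ n + 2 * 45 ^ n := by
          have h11 : ((11 : ℕ) ^ n * 1 : ℝ≥0∞) ≤ 2 * 45 ^ n := by
            rw [mul_comm]
            gcongr <;> norm_num
          exact add_le_add h11 h11
      _ = johnNirenbergStep n := by
          rw [johnNirenbergStep]
          push_cast
          ring

theorem lt_localOsc_dilate (hb : LocallyIntegrable b volume)
    (hb₁ : bmoNorm b ≤ 1) {Q₀ Q₁ : Cube n} (hr : Q₁.r ≤ Q₀.r) {x : RSp n} (hx₀ : x ∈ Q₀.set)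
    (hx₁ : x ∈ (Q₁.dilate 5).set)
    (hmax : ∀ Q ∈ deviatingCubes b Q₀ (johnNirenbergStep n), x ∈ Q.set → Q.r ≤ 4 * Q₁.r)
    {l : ℝ≥0∞} (hl : l + johnNirenbergStep n < localOsc b Q₀ x) :
    l < localOsc b (Q₁.dilate 5) x := by
  obtain ⟨Q, hxQ, hQr, hdev⟩ := lt_localOsc_iff.1 hl
  have hQ : Q ∈ deviatingCubes b Q₀ (johnNirenbergStep n) :=
    ⟨⟨x, hxQ, hx₀⟩, hQr, le_add_self.trans_lt hdev⟩
  refine lt_localOsc_iff.2 ⟨Q, hxQ, ?_, lt_of_add_lt_add_right (hdev.trans_le ?_)⟩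
  · simp only [Cube.dilate_r, Nat.cast_ofNat]
    linarith [hmax Q hQ hxQ, Q₁.r_pos]
  · rw [← sub_add_sub_cancel _ (cubeAvg (Q₁.dilate 5) b)]
    exact (enorm_add_le _ _).trans (add_le_add_right
      (enorm_cubeAvg_dilate_sub_le_johnNirenbergStep hb hb₁ hr hx₀ hx₁ hmax) _)

theorem volume_lt_localOsc_le_half (hb : LocallyIntegrable b volume) (hb₁ : bmoNorm b ≤ 1)
    {l A : ℝ≥0∞}
    (hA : ∀ Q : Cube n, volume.restrict Q.set {x | l < localOsc b Q x} ≤ A * volume Q.set)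
    (Q₀ : Cube n) :
    volume.restrict Q₀.set {x | l + johnNirenbergStep n < localOsc b Q₀ x} ≤
      A * 2⁻¹ * volume Q₀.set := by
  obtain ⟨u, hu, hcount, hdisj, hcover⟩ := Cube.exists_countable_disjoint_maximal_covering
    (deviatingCubes b Q₀ (johnNirenbergStep n)) Q₀.r (fun Q hQ => hQ.2.1)
  have hsub : {x | l + johnNirenbergStep n < localOsc b Q₀ x} ∩ Q₀.set ⊆
      ⋃ Q ∈ u, {x | l < localOsc b (Q.dilate 5) x} ∩ (Q.dilate 5).set := by
    rintro x ⟨hx, hx₀⟩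
    obtain ⟨Q, hxQ, hQr, hdev⟩ := lt_localOsc_iff.1 (le_add_self.trans_lt hx)
    obtain ⟨Q₁, hQ₁, hx₁, hmax⟩ := hcover Q ⟨⟨x, hxQ, hx₀⟩, hQr, hdev⟩ x hxQ
    exact mem_biUnion hQ₁ ⟨lt_localOsc_dilate hb hb₁ (hu hQ₁).2.1 hx₀ hx₁ hmax hx, hx₁⟩
  rw [Measure.restrict_apply' Q₀.measurableSet_set]
  calc volume ({x | l + johnNirenbergStep n < localOsc b Q₀ x} ∩ Q₀.set)
      ≤ ∑' Q : u, volume ({x | l < localOsc b (Q.1.dilate 5) x} ∩ (Q.1.dilate 5).set) :=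
        (measure_mono hsub).trans (measure_biUnion_le _ hcount _)
    _ ≤ ∑' Q : u, A * volume (Q.1.dilate 5).set := by
        refine ENNReal.tsum_le_tsum fun Q => ?_
        rw [← Measure.restrict_apply' (Cube.measurableSet_set _)]
        exact hA _
    _ ≤ A * (2⁻¹ * volume Q₀.set) := by
        rw [ENNReal.tsum_mul_left]
        gcongr
        exact tsum_volume_dilate_deviatingCubes_le hb hb₁ hu hcount hdisj
    _ = A * 2⁻¹ * volume Q₀.set := (mul_assoc _ _ _).symm

theorem volume_lt_localOsc_le (hb : LocallyIntegrable b volume) (hb₁ : bmoNorm b ≤ 1) (i : ℕ)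
    (Q₀ : Cube n) :
    volume.restrict Q₀.set {x | i * johnNirenbergStep n < localOsc b Q₀ x} ≤
      2⁻¹ ^ i * volume Q₀.set := by
  induction i generalizing Q₀ with
  | zero =>
    rw [pow_zero, one_mul, ← Measure.restrict_apply_univ Q₀.set]
    exact measure_mono (subset_univ _)
  | succ i ih =>
    simpa only [Nat.cast_add, Nat.cast_one, add_mul, one_mul, pow_succ] using
      volume_lt_localOsc_le_half hb hb₁ ih Q₀

theorem tsum_one_add_mul_rpow_mul_geometric_ne_top (K : ℝ≥0) (m : ℝ) :
    ∑' i : ℕ, (1 + (i + 1) * (K : ℝ≥0∞)) ^ m * 2⁻¹ ^ i ≠ ∞ := by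
  obtain ⟨N, hN⟩ := exists_nat_ge m
  have hsum : Summable fun i : ℕ => ((i + 1 : ℕ) : ℝ≥0) ^ N * 2⁻¹ ^ (i + 1) := by
    rw [NNReal.summable_nat_add_iff (f := fun i : ℕ => (i : ℝ≥0) ^ N * 2⁻¹ ^ i) 1,
      ← NNReal.summable_coe]
    simpa using summable_pow_mul_geometric_of_norm_lt_one N (r := (2⁻¹ : ℝ)) (by norm_num)
  have hle (i : ℕ) : (1 + (i + 1) * (K : ℝ≥0∞)) ^ m * 2⁻¹ ^ i ≤
      (((2 * (1 + K) ^ N) * (((i + 1 : ℕ) : ℝ≥0) ^ N * 2⁻¹ ^ (i + 1)) : ℝ≥0) : ℝ≥0∞) := by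
    calc (1 + (i + 1) * (K : ℝ≥0∞)) ^ m * 2⁻¹ ^ i
        ≤ ((1 + K) * (i + 1)) ^ N * 2⁻¹ ^ i := by
          gcongr
          calc (1 + (i + 1) * (K : ℝ≥0∞)) ^ m ≤ (1 + (i + 1) * (K : ℝ≥0∞)) ^ (N : ℝ) := by
                gcongr
                exact le_self_add
            _ ≤ ((1 + K) * (i + 1)) ^ N := by
                rw [ENNReal.rpow_natCast, add_mul 1, one_mul, mul_comm (K : ℝ≥0∞)]
                gcongr
                exact le_add_self
      _ = ((1 + K) * (i + 1)) ^ N * (2 * 2⁻¹ * 2⁻¹ ^ i) := by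
          rw [ENNReal.mul_inv_cancel two_ne_zero ofNat_ne_top, one_mul]
      _ = _ := by
          push_cast
          rw [mul_pow, pow_succ (2⁻¹ : ℝ≥0∞)]
          ring
  refine ne_top_of_le_ne_top ?_ (ENNReal.tsum_le_tsum hle)
  exact ENNReal.tsum_coe_ne_top_iff_summable.2 (hsum.mul_left _)

theorem le_tsum_indicator_of_monotone {α : Type*} {K : ℝ≥0} (hK : K ≠ 0) {F : ℝ≥0∞ → ℝ≥0∞}
    (hF : Monotone F) (hF₀ : F 0 ≠ 0) (g : α → ℝ≥0∞) (x : α) :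
    F (g x) ≤ F K + ∑' i : ℕ, {x | i * (K : ℝ≥0∞) < g x}.indicator
      (fun _ => F ((i + 1) * (K : ℝ≥0∞))) x := by
  classical
  have hind (i : ℕ) (hi : (i : ℝ≥0∞) * K < g x) : {x | i * (K : ℝ≥0∞) < g x}.indicator
      (fun _ => F ((i + 1) * (K : ℝ≥0∞))) x = F ((i + 1) * K) :=
    indicator_of_mem (s := {x | i * (K : ℝ≥0∞) < g x}) hi _
  rcases eq_or_ne (g x) ∞ with hg | hg
  · have htop : ∑' i : ℕ, {x | i * (K : ℝ≥0∞) < g x}.indicator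
        (fun _ => F ((i + 1) * (K : ℝ≥0∞))) x = ∞ := by
      refine top_unique ((ENNReal.tsum_const_eq_top_of_ne_zero (α := ℕ) hF₀).ge.trans
        (ENNReal.tsum_le_tsum fun i => ?_))
      rw [hind i (by rw [hg]; finiteness)]
      exact hF zero_le
    simp only [htop, add_top, le_top]
  have hex : ∃ i : ℕ, g x ≤ (i + 1) * (K : ℝ≥0∞) := by
    obtain ⟨i, hi⟩ := ENNReal.exists_nat_mul_gt (ENNReal.coe_ne_zero.2 hK) hg
    exact ⟨i, hi.le.trans (mul_le_mul_left le_self_add _)⟩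
  have hfind := hF (Nat.find_spec hex)
  rcases hi : Nat.find hex with _ | i
  · refine le_add_right (hfind.trans_eq ?_)
    rw [hi, Nat.cast_zero, zero_add, one_mul]
  · have hlt : ((i + 1 : ℕ) : ℝ≥0∞) * K < g x := by
      simpa using Nat.find_min hex (m := i) (by lia)
    refine le_add_left (hfind.trans (le_trans (le_of_eq ?_) (ENNReal.le_tsum (i + 1))))
    rw [hind _ hlt, hi]

theorem exists_measurable_majorant_rpow_of_geometric_decay {K : ℝ≥0} (hK : K ≠ 0) {m : ℝ}
    (hm : 0 ≤ m) : ∃ C : ℝ≥0, ∀ {α : Type*} [MeasurableSpace α] (μ : Measure α) (g : α → ℝ≥0∞),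
      (∀ i : ℕ, μ {x | i * (K : ℝ≥0∞) < g x} ≤ 2⁻¹ ^ i * μ univ) →
      ∃ W : α → ℝ≥0∞, Measurable W ∧ (∀ x, (1 + g x) ^ m ≤ W x) ∧ ∫⁻ x, W x ∂μ ≤ C * μ univ := by
  have hsum := tsum_one_add_mul_rpow_mul_geometric_ne_top K m
  set c : ℕ → ℝ≥0∞ := fun i => (1 + (i + 1) * (K : ℝ≥0∞)) ^ m
  have hmono : Monotone fun t : ℝ≥0∞ => (1 + t) ^ m := fun s t hst =>
    ENNReal.rpow_le_rpow (add_le_add_right hst 1) hm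
  refine ⟨((1 + K) ^ m + ∑' i, c i * 2⁻¹ ^ i).toNNReal, fun {α} _ μ g hdecay => ?_⟩
  rw [ENNReal.coe_toNNReal (by finiteness)]
  set s : ℕ → Set α := fun i => toMeasurable μ {x | i * (K : ℝ≥0∞) < g x}
  have hs (i : ℕ) : MeasurableSet (s i) := measurableSet_toMeasurable _ _
  refine ⟨fun x => (1 + K) ^ m + ∑' i, (s i).indicator (fun _ => c i) x, ?_, fun x => ?_, ?_⟩
  · exact measurable_const.add (.tsum fun i => measurable_const.indicator (hs i))
  · refine (le_tsum_indicator_of_monotone hK hmono (by simp) g x).trans ?_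
    exact add_le_add_right (ENNReal.tsum_le_tsum fun i =>
      indicator_le_indicator_of_subset (subset_toMeasurable _ _) (fun _ => zero_le) x) _
  · rw [lintegral_add_left measurable_const, lintegral_const, add_mul, ← ENNReal.tsum_mul_right,
      lintegral_tsum fun i => (measurable_const.indicator (hs i)).aemeasurable]
    refine add_le_add_right (ENNReal.tsum_le_tsum fun i => ?_) _
    rw [lintegral_indicator_const (hs i), measure_toMeasurable, mul_assoc]
    exact mul_le_mul_right (hdecay i) _

theorem exists_measurable_majorant_localOsc (n : ℕ) {m : ℝ} (hm : 0 ≤ m) :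
    ∃ C : ℝ≥0, ∀ b : RSp n → ℝ, LocallyIntegrable b volume → bmoNorm b ≤ 1 → ∀ Q₀ : Cube n,
      ∃ W : RSp n → ℝ≥0∞, Measurable W ∧ (∀ x, (1 + localOsc b Q₀ x) ^ m ≤ W x) ∧
        ⨍⁻ x in Q₀.set, W x ∂volume ≤ C := by
  obtain ⟨C, hC⟩ := exists_measurable_majorant_rpow_of_geometric_decay
    (K := johnNirenbergStep n) (by simp [johnNirenbergStep]) hm
  refine ⟨C, fun b hb hb₁ Q₀ => ?_⟩
  obtain ⟨W, hW, hle, hint⟩ := hC (volume.restrict Q₀.set) (localOsc b Q₀) fun i => by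
    simpa only [Measure.restrict_apply_univ] using volume_lt_localOsc_le hb hb₁ i Q₀
  refine ⟨W, hW, hle, ?_⟩
  rwa [← Q₀.mul_volume_set_le_iff, mul_comm, Q₀.volume_mul_laverage, ← Measure.restrict_apply_univ]

theorem exists_laverage_rpow_osc_le (n : ℕ) {m : ℝ} (hm : 0 ≤ m) :
    ∃ C : ℝ≥0, ∀ b : RSp n → ℝ, LocallyIntegrable b volume → bmoNorm b ≤ 1 → ∀ Q : Cube n,
      ⨍⁻ x in Q.set, (1 + ‖b x - cubeAvg Q b‖ₑ) ^ m ∂volume ≤ C := by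
  obtain ⟨C, hC⟩ := exists_measurable_majorant_localOsc n hm
  refine ⟨C, fun b hb hb₁ Q => ?_⟩
  obtain ⟨W, -, hle, hint⟩ := hC b hb hb₁ Q
  refine (laverage_mono_ae ?_).trans hint
  filter_upwards [ae_restrict_of_ae (ae_enorm_sub_cubeAvg_le_localOsc hb)] with x hx
  exact (ENNReal.rpow_le_rpow (add_le_add_right (hx Q) 1) hm).trans (hle x)

end JohnNirenberg

/-! ### A weighted maximal inequality -/

section WeightedMaximal

theorem rpow_lintegral_le_lintegral_rpow {α : Type*} [MeasurableSpace α] {μ : Measure α}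
    [IsProbabilityMeasure μ] {P : ℝ} (hP : 1 ≤ P) {f : α → ℝ≥0∞} (hf : AEMeasurable f μ) :
    (∫⁻ x, f x ∂μ) ^ P ≤ ∫⁻ x, f x ^ P ∂μ := by
  have hP₀ : 0 < P := by linarith
  have hle := eLpNorm_le_eLpNorm_of_exponent_le (ENNReal.one_le_ofReal.2 hP)
    hf.aestronglyMeasurable
  rw [eLpNorm_one_eq_lintegral_enorm, eLpNorm_eq_lintegral_rpow_enorm_toReal (by simpa)
    ENNReal.ofReal_ne_top, ENNReal.toReal_ofReal hP₀.le, one_div,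
    ENNReal.le_rpow_inv_iff hP₀] at hle
  exact hle

theorem le_two_mul_lintegral_indicator {α : Type*} [MeasurableSpace α] {μ : Measure α}
    [IsProbabilityMeasure μ] {G : α → ℝ≥0∞} (hG : Measurable G) {c : ℝ≥0∞} (hc : c ≠ ∞)
    (h : c ≤ ∫⁻ x, G x ∂μ) : c ≤ 2 * ∫⁻ x, {x | c < 2 * G x}.indicator G x ∂μ := by
  have hmeas : MeasurableSet {x | c < 2 * G x} := measurableSet_lt measurable_const (hG.const_mul 2)
  have hle : ∫⁻ x, G x ∂μ ≤ ∫⁻ x, ({x | c < 2 * G x}.indicator G x + c / 2) ∂μ := by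
    refine lintegral_mono fun x => ?_
    by_cases hx : c < 2 * G x
    · exact (indicator_of_mem (s := {x | c < 2 * G x}) hx G).ge.trans le_self_add
    · refine le_add_left ?_
      rw [ENNReal.le_div_iff_mul_le (by simp) (by simp), mul_comm]
      exact not_lt.1 hx
  rw [lintegral_add_left (hG.indicator hmeas), lintegral_const, measure_univ, mul_one] at hle
  have hhalf := (ENNReal.add_halves c).le.trans (h.trans hle)
  rw [← ENNReal.div_le_iff' two_ne_zero ofNat_ne_top]
  exact (ENNReal.add_le_add_iff_right (by finiteness)).1 hhalf

theorem rpow_sub_one_mul_le {P : ℝ} (hP : 1 ≤ P) {c g : ℝ≥0∞} (hg : c ≤ 2 * g) :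
    c ^ (P - 1) * g ≤ 2 ^ (P - 1) * g ^ P := by
  have hP' : 0 ≤ P - 1 := by linarith
  calc c ^ (P - 1) * g ≤ (2 * g) ^ (P - 1) * g ^ (1 : ℝ) := by
        rw [ENNReal.rpow_one]
        gcongr
    _ = 2 ^ (P - 1) * g ^ P := by
      rw [ENNReal.mul_rpow_of_nonneg _ _ hP', mul_assoc,
        ← ENNReal.rpow_add_of_nonneg _ _ hP' zero_le_one, sub_add_cancel]

theorem exists_tsum_zpow_sub_natCast_rpow_eq {s : ℝ} (hs : 0 < s) : ∃ C : ℝ≥0, ∀ k : ℤ,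
    ∑' j : ℕ, ((2 : ℝ≥0∞) ^ (k - j)) ^ s = C * (2 ^ k) ^ s := by
  have hρ : ((2 : ℝ≥0∞) ^ s)⁻¹ < 1 := ENNReal.inv_lt_one.2 (ENNReal.one_lt_rpow (by norm_num) hs)
  have hC : (1 - ((2 : ℝ≥0∞) ^ s)⁻¹)⁻¹ ≠ ∞ := ENNReal.inv_ne_top.2 (tsub_pos_of_lt hρ).ne'
  refine ⟨(1 - ((2 : ℝ≥0∞) ^ s)⁻¹)⁻¹.toNNReal, fun k => ?_⟩
  rw [ENNReal.coe_toNNReal hC, ← ENNReal.tsum_geometric, ← ENNReal.tsum_mul_right]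
  refine tsum_congr fun j => ?_
  rw [ENNReal.zpow_sub two_ne_zero ofNat_ne_top, zpow_natCast,
    ENNReal.mul_rpow_of_nonneg _ _ hs.le, ENNReal.inv_rpow, ← ENNReal.inv_pow,
    ← ENNReal.rpow_natCast, ← ENNReal.rpow_natCast, ← ENNReal.rpow_mul, ← ENNReal.rpow_mul,
    mul_comm s, mul_comm]

theorem exists_tsum_zpow_rpow_mul_indicator_le {P : ℝ} (hP : 1 < P) : ∃ C : ℝ≥0,
    ∀ {α : Type*} (G : α → ℝ≥0∞) (x : α),
      ∑' k : ℤ, ((2 : ℝ≥0∞) ^ k) ^ (P - 1) * {x | (2 : ℝ≥0∞) ^ k < 2 * G x}.indicator G x ≤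
        C * G x ^ P := by
  have hP₀ : 0 < P - 1 := by linarith
  obtain ⟨C, hC⟩ := exists_tsum_zpow_sub_natCast_rpow_eq hP₀
  refine ⟨(C + 1) * 2 ^ (P - 1), fun G x => ?_⟩
  rw [ENNReal.coe_mul, ENNReal.coe_rpow_of_nonneg _ hP₀.le, ENNReal.coe_ofNat]
  rcases eq_or_ne (G x) ∞ with ht | ht
  · rw [ht, ENNReal.top_rpow_of_pos (by linarith), ENNReal.mul_top (by simp)]
    exact le_top
  rcases eq_or_ne (G x) 0 with h₀ | h₀
  · simp [h₀]
  obtain ⟨k₀, hk₀, hk₀'⟩ := ENNReal.exists_mem_Ioc_zpow (x := 2 * G x) (y := 2) (by simp [h₀])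
    (by finiteness) (by norm_num) (by simp)
  have hsupp : Function.support (fun k : ℤ =>
      ((2 : ℝ≥0∞) ^ k) ^ (P - 1) * {x | (2 : ℝ≥0∞) ^ k < 2 * G x}.indicator G x) ⊆
      range fun j : ℕ => k₀ - j := by
    intro k hk
    have hlt : (2 : ℝ≥0∞) ^ k < 2 ^ (k₀ + 1) :=
      (mem_of_indicator_ne_zero (right_ne_zero_of_mul hk)).trans_le hk₀'
    have hk : k < k₀ + 1 := by
      by_contra! h
      exact hlt.not_ge (ENNReal.zpow_le_of_le one_le_two h)
    exact ⟨(k₀ - k).toNat, by simp; lia⟩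
  rw [← Function.Injective.tsum_eq (fun i j h => by simpa using h) hsupp]
  calc ∑' j : ℕ, ((2 : ℝ≥0∞) ^ (k₀ - j)) ^ (P - 1) *
        {x | (2 : ℝ≥0∞) ^ (k₀ - j) < 2 * G x}.indicator G x
      ≤ ∑' j : ℕ, ((2 : ℝ≥0∞) ^ (k₀ - j)) ^ (P - 1) * G x :=
        ENNReal.tsum_le_tsum fun j => mul_le_mul_right (indicator_le_self _ _ x) _
    _ = C * ((2 ^ k₀) ^ (P - 1) * G x) := by rw [ENNReal.tsum_mul_right, hC, mul_assoc]
    _ ≤ (C + 1 : ℝ≥0) * (2 ^ (P - 1) * G x ^ P) :=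
        mul_le_mul' (ENNReal.coe_le_coe.2 le_self_add) (rpow_sub_one_mul_le hP.le hk₀.le)
    _ = (C + 1 : ℝ≥0) * 2 ^ (P - 1) * G x ^ P := (mul_assoc _ _ _).symm

variable {n : ℕ}

theorem ae_enorm_sub_cubeAvg_le_two_mul_localOsc {b : RSp n → ℝ} (hb : LocallyIntegrable b volume) :
    ∀ᵐ x, ∀ Q Q₀ : Cube n, x ∈ Q.set → Q.r ≤ Q₀.r →
      ‖b x - cubeAvg Q b‖ₑ ≤ 2 * localOsc b Q₀ x := by
  filter_upwards [ae_enorm_sub_cubeAvg_le_localOsc hb] with x hx Q Q₀ hxQ hr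
  rw [← sub_sub_sub_cancel_right _ _ (cubeAvg Q₀ b), two_mul]
  exact enorm_sub_le.trans (add_le_add (hx Q₀) (enorm_cubeAvg_sub_le_localOsc hxQ hr))

theorem Cube.volume_mul_laverage_rpow_le {P : ℝ} (hP : 1 ≤ P) {G : RSp n → ℝ≥0∞}
    (hG : Measurable G) (Q : Cube n) :
    volume Q.set * (⨍⁻ x in Q.set, G x ∂volume) ^ P ≤ ∫⁻ x, G x ^ P :=
  calc volume Q.set * (⨍⁻ x in Q.set, G x ∂volume) ^ P
      ≤ volume Q.set * ⨍⁻ x in Q.set, G x ^ P ∂volume :=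
        mul_le_mul_right (rpow_lintegral_le_lintegral_rpow hP hG.aemeasurable) _
    _ = ∫⁻ x in Q.set, G x ^ P := Q.volume_mul_laverage _
    _ ≤ ∫⁻ x, G x ^ P := setLIntegral_le_lintegral _ _

theorem Cube.laverage_ne_top {P : ℝ} (hP : 1 ≤ P) {G : RSp n → ℝ≥0∞} (hG : Measurable G)
    (hGP : ∫⁻ x, G x ^ P ≠ ∞) (Q : Cube n) : ⨍⁻ x in Q.set, G x ∂volume ≠ ∞ := by
  intro h
  refine hGP (top_le_iff.1 ((Q.volume_mul_laverage_rpow_le hP hG).trans' ?_))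
  rw [h, ENNReal.top_rpow_of_pos (by linarith), ENNReal.mul_top Q.volume_set_ne_zero]

theorem Cube.radius_le_of_le_laverage (hn : n ≠ 0) {P : ℝ} (hP : 1 ≤ P) {G : RSp n → ℝ≥0∞}
    (hG : Measurable G) (hGP : ∫⁻ x, G x ^ P ≠ ∞) {c : ℝ≥0∞} (hc : c ≠ 0) (hc' : c ≠ ∞) :
    ∃ R, ∀ Q : Cube n, c ≤ ⨍⁻ x in Q.set, G x ∂volume → Q.r ≤ R := by
  have hcP : c ^ P ≠ 0 := by simp [hc, hc']
  have hcP' : c ^ P ≠ ∞ := by finiteness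
  refine ⟨_, fun Q hQ => Q.radius_le_of_volume_set_le hn (ENNReal.div_ne_top hGP hcP) ?_⟩
  rw [ENNReal.le_div_iff_mul_le (.inl hcP) (.inl hcP')]
  exact (mul_le_mul_right (ENNReal.rpow_le_rpow hQ (by linarith)) _).trans
    (Q.volume_mul_laverage_rpow_le hP hG)

theorem mul_tsum_volume_le_of_le_laverage {G : RSp n → ℝ≥0∞} (hG : Measurable G) {c : ℝ≥0∞}
    (hc : c ≠ ∞) {u : Set (Cube n)} (hu : ∀ Q ∈ u, c ≤ ⨍⁻ x in Q.set, G x ∂volume)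
    (hcount : u.Countable) (hdisj : u.PairwiseDisjoint Cube.set) :
    c * ∑' Q : u, volume Q.1.set ≤ 2 * ∫⁻ x, {x | c < 2 * G x}.indicator G x := by
  calc c * ∑' Q : u, volume Q.1.set = ∑' Q : u, c * volume Q.1.set := ENNReal.tsum_mul_left.symm
    _ ≤ ∑' Q : u, 2 * ∫⁻ x in Q.1.set, {x | c < 2 * G x}.indicator G x := by
        refine ENNReal.tsum_le_tsum fun Q => ?_
        rw [← Q.1.volume_mul_laverage, mul_left_comm, mul_comm c]
        exact mul_le_mul_right (le_two_mul_lintegral_indicator hG hc (hu Q.1 Q.2)) _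
    _ = 2 * ∫⁻ x in ⋃ Q ∈ u, Q.set, {x | c < 2 * G x}.indicator G x := by
        rw [ENNReal.tsum_mul_left,
          lintegral_biUnion hcount (fun Q _ => Q.measurableSet_set) hdisj]
    _ ≤ 2 * ∫⁻ x, {x | c < 2 * G x}.indicator G x :=
        mul_le_mul_right (setLIntegral_le_lintegral _ _) _

theorem exists_measurable_majorant_osc_on_dilate (n : ℕ) {m : ℝ} (hm : 0 ≤ m) :
    ∃ C : ℝ≥0, ∀ b : RSp n → ℝ, LocallyIntegrable b volume → bmoNorm b ≤ 1 →
      ∃ w : Cube n → RSp n → ℝ≥0∞, (∀ Q, Measurable (w Q)) ∧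
        (∀ Q, ∫⁻ x, w Q x ≤ C * volume Q.set) ∧
        ∀ᵐ x, ∀ Q Q' : Cube n, x ∈ Q.set → Q.set ⊆ (Q'.dilate 5).set → Q.r ≤ 2 * Q'.r →
          (1 + ‖b x - cubeAvg Q b‖ₑ) ^ m ≤ w Q' x := by
  obtain ⟨C, hC⟩ := exists_measurable_majorant_localOsc n hm
  refine ⟨2 ^ m * (5 ^ n * C), fun b hb hb₁ => ?_⟩
  choose W hW hle hint using hC b hb hb₁
  refine ⟨fun Q x => 2 ^ m * (Q.dilate 5).set.indicator (W (Q.dilate 5)) x,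
    fun Q => ((hW _).indicator (Cube.measurableSet_set _)).const_mul _, fun Q => ?_, ?_⟩
  · rw [lintegral_const_mul _ ((hW _).indicator (Cube.measurableSet_set _)),
      lintegral_indicator (Cube.measurableSet_set _), ← Cube.volume_mul_laverage,
      Cube.volume_dilate, Nat.cast_ofNat]
    calc 2 ^ m * (5 ^ n * volume Q.set * ⨍⁻ x in (Q.dilate 5).set, W (Q.dilate 5) x ∂volume)
        ≤ 2 ^ m * (5 ^ n * volume Q.set * C) := by
          gcongr
          exact hint _
      _ = (2 ^ m * (5 ^ n * C) : ℝ≥0) * volume Q.set := by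
          push_cast
          rw [ENNReal.coe_rpow_of_nonneg _ hm, ENNReal.coe_ofNat]
          ring
  · filter_upwards [ae_enorm_sub_cubeAvg_le_two_mul_localOsc hb] with x hx Q Q' hxQ hsub hr
    have hr' : Q.r ≤ (Q'.dilate 5).r := by
      simp only [Cube.dilate_r, Nat.cast_ofNat]
      linarith [Q'.r_pos]
    calc (1 + ‖b x - cubeAvg Q b‖ₑ) ^ m
        ≤ (2 * (1 + localOsc b (Q'.dilate 5) x)) ^ m := by
          rw [mul_add, mul_one]
          gcongr
          · exact one_le_two
          · exact hx Q _ hxQ hr'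
      _ ≤ 2 ^ m * (Q'.dilate 5).set.indicator (W (Q'.dilate 5)) x := by
          rw [ENNReal.mul_rpow_of_nonneg _ _ hm, indicator_of_mem (hsub hxQ)]
          gcongr
          exact hle _ x

theorem exists_measurable_majorant_osc_of_le_laverage (n : ℕ) {m : ℝ} (hm : 0 ≤ m) :
    ∃ C : ℝ≥0, ∀ b : RSp n → ℝ, LocallyIntegrable b volume → bmoNorm b ≤ 1 →
      ∀ (G : RSp n → ℝ≥0∞) (c : ℝ≥0∞) (R : ℝ), Measurable G → c ≠ ∞ →
      (∀ Q : Cube n, c ≤ ⨍⁻ x in Q.set, G x ∂volume → Q.r ≤ R) →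
      ∃ S : RSp n → ℝ≥0∞, Measurable S ∧
        (∀ᵐ x, ∀ Q : Cube n, x ∈ Q.set → c ≤ ⨍⁻ y in Q.set, G y ∂volume →
          (1 + ‖b x - cubeAvg Q b‖ₑ) ^ m ≤ S x) ∧
        c * ∫⁻ x, S x ≤ C * ∫⁻ x, {x | c < 2 * G x}.indicator G x := by
  obtain ⟨C, hC⟩ := exists_measurable_majorant_osc_on_dilate n hm
  refine ⟨C * 2, fun b hb hb₁ G c R hG hc hR => ?_⟩
  obtain ⟨w, hw, hint, hle⟩ := hC b hb hb₁
  obtain ⟨u, hu, hcount, hdisj, hcover⟩ := Cube.exists_countable_disjoint_covering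
    {Q : Cube n | c ≤ ⨍⁻ x in Q.set, G x ∂volume} R hR
  have := hcount.to_subtype
  refine ⟨fun x => ∑' Q : u, w Q.1 x, Measurable.tsum fun Q => hw Q.1, ?_, ?_⟩
  · filter_upwards [hle] with x hx Q hxQ hQ
    obtain ⟨Q', hQ', hsub, hr⟩ := hcover Q hQ
    exact (hx Q Q' hxQ hsub hr).trans (ENNReal.le_tsum (f := fun Q : u => w Q.1 x) ⟨Q', hQ'⟩)
  · rw [lintegral_tsum fun Q : u => (hw Q.1).aemeasurable]
    have hsum : ∑' Q : u, ∫⁻ x, w Q.1 x ≤ C * ∑' Q : u, volume Q.1.set := by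
      rw [← ENNReal.tsum_mul_left]
      exact ENNReal.tsum_le_tsum fun Q => hint Q.1
    calc c * ∑' Q : u, ∫⁻ x, w Q.1 x ≤ C * (c * ∑' Q : u, volume Q.1.set) := by
          rw [mul_left_comm]
          gcongr
      _ ≤ C * (2 * ∫⁻ x, {x | c < 2 * G x}.indicator G x) :=
          mul_le_mul_right (mul_tsum_volume_le_of_le_laverage hG hc hu hcount hdisj) _
      _ = _ := by rw [ENNReal.coe_mul, ENNReal.coe_ofNat, mul_assoc]

theorem exists_lintegral_tsum_zpow_rpow_mul_le {P : ℝ} (hP : 1 < P) : ∃ C : ℝ≥0,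
    ∀ (G : RSp n → ℝ≥0∞) (S : ℤ → RSp n → ℝ≥0∞) (A : ℝ≥0∞), Measurable G →
      (∀ k, Measurable (S k)) →
      (∀ k : ℤ, 2 ^ k * ∫⁻ x, S k x ≤ A * ∫⁻ x, {x | (2 : ℝ≥0∞) ^ k < 2 * G x}.indicator G x) →
      ∫⁻ x, ∑' k : ℤ, (2 ^ (k + 1)) ^ P * S k x ≤ C * A * ∫⁻ x, G x ^ P := by
  have hP₀ : 0 < P := by linarith
  obtain ⟨C, hC⟩ := exists_tsum_zpow_rpow_mul_indicator_le hP
  refine ⟨2 ^ P * C, fun G S A hG hS hint => ?_⟩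
  have hpow (k : ℤ) : ((2 : ℝ≥0∞) ^ (k + 1)) ^ P = 2 ^ P * (2 ^ k) ^ (P - 1) * 2 ^ k := by
    rw [ENNReal.zpow_add two_ne_zero ofNat_ne_top, zpow_one,
      ENNReal.mul_rpow_of_nonneg _ _ hP₀.le, mul_comm, mul_assoc]
    conv_rhs => rw [← ENNReal.rpow_one ((2 : ℝ≥0∞) ^ k), ← ENNReal.rpow_mul, one_mul,
      ← ENNReal.rpow_add_of_nonneg _ _ (by linarith) zero_le_one, sub_add_cancel]
  have hind (k : ℤ) : Measurable ({x | (2 : ℝ≥0∞) ^ k < 2 * G x}.indicator G) :=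
    hG.indicator (measurableSet_lt measurable_const (hG.const_mul 2))
  calc ∫⁻ x, ∑' k : ℤ, (2 ^ (k + 1)) ^ P * S k x
      = ∑' k : ℤ, 2 ^ P * (2 ^ k) ^ (P - 1) * (2 ^ k * ∫⁻ x, S k x) := by
        rw [lintegral_tsum fun k => ((hS k).const_mul _).aemeasurable]
        simp_rw [lintegral_const_mul _ (hS _), hpow, mul_assoc]
    _ ≤ ∑' k : ℤ, 2 ^ P * (2 ^ k) ^ (P - 1) *
          (A * ∫⁻ x, {x | (2 : ℝ≥0∞) ^ k < 2 * G x}.indicator G x) :=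
        ENNReal.tsum_le_tsum fun k => mul_le_mul_right (hint k) _
    _ = 2 ^ P * A * ∫⁻ x, ∑' k : ℤ,
          (2 ^ k) ^ (P - 1) * {x | (2 : ℝ≥0∞) ^ k < 2 * G x}.indicator G x := by
        rw [lintegral_tsum fun k => ((hind k).const_mul _).aemeasurable, ← ENNReal.tsum_mul_left]
        refine tsum_congr fun k => ?_
        rw [lintegral_const_mul _ (hind k)]
        ring
    _ ≤ 2 ^ P * A * ∫⁻ x, C * G x ^ P := by
        gcongr with x
        exact hC G x
    _ = (2 ^ P * C : ℝ≥0) * A * ∫⁻ x, G x ^ P := by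
        rw [lintegral_const_mul _ (hG.pow_const P), ENNReal.coe_mul,
          ENNReal.coe_rpow_of_nonneg _ hP₀.le, ENNReal.coe_ofNat]
        ring

theorem exists_weighted_maximal_majorant (hn : n ≠ 0) {P m : ℝ} (hP : 1 < P) (hm : 0 ≤ m) :
    ∃ C : ℝ≥0, ∀ b : RSp n → ℝ, LocallyIntegrable b volume → bmoNorm b ≤ 1 →
      ∀ G : RSp n → ℝ≥0∞, Measurable G → ∫⁻ x, G x ^ P ≠ ∞ →
      ∃ S : RSp n → ℝ≥0∞, Measurable S ∧
        (∀ᵐ x, ∀ Q : Cube n, x ∈ Q.set →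
          (1 + ‖b x - cubeAvg Q b‖ₑ) ^ m * (⨍⁻ y in Q.set, G y ∂volume) ^ P ≤ S x) ∧
        ∫⁻ x, S x ≤ C * ∫⁻ x, G x ^ P := by
  have hP₀ : 0 < P := by linarith
  obtain ⟨C₁, hC₁⟩ := exists_measurable_majorant_osc_of_le_laverage n hm
  obtain ⟨C₂, hC₂⟩ := exists_lintegral_tsum_zpow_rpow_mul_le (n := n) hP
  refine ⟨C₂ * C₁, fun b hb hb₁ G hG hGP => ?_⟩
  have hc (k : ℤ) : (2 : ℝ≥0∞) ^ k ≠ 0 := (ENNReal.zpow_pos two_ne_zero ofNat_ne_top k).ne'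
  have hc' (k : ℤ) : (2 : ℝ≥0∞) ^ k ≠ ∞ := ENNReal.zpow_ne_top two_ne_zero ofNat_ne_top k
  choose R hR using fun k : ℤ => Cube.radius_le_of_le_laverage hn hP.le hG hGP (hc k) (hc' k)
  choose S hS hle hint using fun k : ℤ => hC₁ b hb hb₁ G (2 ^ k) (R k) hG (hc' k) (hR k)
  refine ⟨fun x => ∑' k : ℤ, (2 ^ (k + 1)) ^ P * S k x,
    Measurable.tsum fun k => (hS k).const_mul _, ?_, ?_⟩
  · filter_upwards [ae_all_iff.2 hle] with x hx Q hxQ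
    rcases eq_or_ne (⨍⁻ y in Q.set, G y ∂volume) 0 with h₀ | h₀
    · rw [h₀, ENNReal.zero_rpow_of_pos hP₀, mul_zero]
      exact zero_le
    obtain ⟨k, hk, hk'⟩ := ENNReal.exists_mem_Ioc_zpow h₀ (Q.laverage_ne_top hP.le hG hGP)
      one_lt_two ofNat_ne_top
    calc (1 + ‖b x - cubeAvg Q b‖ₑ) ^ m * (⨍⁻ y in Q.set, G y ∂volume) ^ P
        ≤ S k x * (2 ^ (k + 1)) ^ P := by
          gcongr
          exact hx k Q hxQ hk.le
      _ = (2 ^ (k + 1)) ^ P * S k x := mul_comm _ _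
      _ ≤ ∑' k : ℤ, (2 ^ (k + 1)) ^ P * S k x :=
          ENNReal.le_tsum (f := fun k : ℤ => (2 ^ (k + 1)) ^ P * S k x) k
  · rw [ENNReal.coe_mul]
    exact hC₂ G S C₁ hG hS hint

end WeightedMaximal

/-! ### Generalized Φ-functions and their inverses -/

section PhiFunctions

variable {n : ℕ} {Ω : Set (RSp n)} {φ : RSp n → ℝ≥0 → ℝ≥0∞} {x : RSp n}

theorem phiInv_mono (φ : RSp n → ℝ≥0 → ℝ≥0∞) (x : RSp n) : Monotone (phiInv φ x) :=
  fun _ _ h => sInf_le_sInf (image_mono fun _ hs => h.trans hs)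

theorem phiInv_zero : phiInv φ x 0 = 0 :=
  nonpos_iff_eq_zero.1 (sInf_le ⟨0, zero_le (a := φ x 0), rfl⟩)

theorem phiInv_le {t : ℝ≥0∞} {s : ℝ≥0} (h : t ≤ φ x s) : phiInv φ x t ≤ s :=
  sInf_le ⟨s, h, rfl⟩

theorem lt_of_lt_phiInv {t : ℝ≥0∞} {s : ℝ≥0} (h : s < phiInv φ x t) : φ x s < t := by
  contrapose! h
  exact phiInv_le h

theorem le_phiInv_iff {t a : ℝ≥0∞} : a ≤ phiInv φ x t ↔ ∀ s : ℝ≥0, t ≤ φ x s → a ≤ s := by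
  simp only [phiInv, le_sInf_iff, forall_mem_image, mem_ofPred_eq]

theorem phiInv_le_mul_of_forall {χ : RSp n → ℝ≥0 → ℝ≥0∞} {y : RSp n} {t t' : ℝ≥0∞} {c : ℝ≥0}
    (hc : c ≠ 0) (h : ∀ s : ℝ≥0, t' ≤ χ y s → t ≤ φ x (c * s)) :
    phiInv φ x t ≤ c * phiInv χ y t' := by
  rw [mul_comm, ← ENNReal.div_le_iff (by exact_mod_cast hc) coe_ne_top, le_phiInv_iff]
  intro s hs
  rw [ENNReal.div_le_iff (by exact_mod_cast hc) coe_ne_top, mul_comm]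
  exact_mod_cast phiInv_le (h s hs)

namespace IsWeakPhi

theorem le_phiInv_of_lt (hφ : IsWeakPhi Ω φ) (hx : x ∈ Ω) {t : ℝ≥0∞} {s : ℝ≥0}
    (h : φ x s < t) : s ≤ phiInv φ x t := by
  rw [le_phiInv_iff]
  intro u hu
  by_contra! hus
  exact (h.trans_le hu).not_ge (hφ.mono x hx (by exact_mod_cast hus.le))

theorem le_of_phiInv_lt (hφ : IsWeakPhi Ω φ) (hx : x ∈ Ω) {t : ℝ≥0∞} {s : ℝ≥0}
    (h : phiInv φ x t < s) : t ≤ φ x s := by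
  contrapose! h
  exact hφ.le_phiInv_of_lt hx h

theorem phiInv_ne_top (hφ : IsWeakPhi Ω φ) (hx : x ∈ Ω) {t : ℝ≥0∞} (ht : t ≠ ∞) :
    phiInv φ x t ≠ ∞ := by
  obtain ⟨s, hs⟩ := ((hφ.lim_top x hx).eventually (lt_mem_nhds ht.lt_top)).exists
  exact ne_top_of_le_ne_top coe_ne_top (phiInv_le hs.le)

theorem phiInv_pos (hφ : IsWeakPhi Ω φ) (hx : x ∈ Ω) {t : ℝ≥0∞} (ht : t ≠ 0) :
    0 < phiInv φ x t := by
  obtain ⟨s, hs, hs0⟩ := (((hφ.lim_zero x hx).eventually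
    (gt_mem_nhds (pos_iff_ne_zero.2 ht))).and self_mem_nhdsWithin).exists
  exact (ENNReal.coe_pos.2 hs0).trans_le (hφ.le_phiInv_of_lt hx hs)

theorem aemeasurable_comp_nnnorm (hφ : IsWeakPhi Ω φ) {f : RSp n → ℝ}
    (hf : AEMeasurable f (volume.restrict Ω)) :
    AEMeasurable (fun x => φ x ‖f x‖₊) (volume.restrict Ω) := by
  refine (hφ.meas (fun x => ‖hf.mk f x‖₊) hf.measurable_mk.nnnorm).congr ?_
  filter_upwards [hf.ae_eq_mk] with x hx
  rw [hx]

end IsWeakPhi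

theorem AInc.exists_rpow_mul_le {p : ℝ} (h : AInc p Ω φ) (hφ : IsWeakPhi Ω φ) :
    ∃ L : ℝ≥0, 1 ≤ L ∧ ∀ x ∈ Ω, ∀ s c : ℝ≥0, 1 ≤ c →
      (c : ℝ≥0∞) ^ p * φ x s ≤ L * φ x (c * s) := by
  obtain ⟨L, hL, hinc⟩ := h
  refine ⟨L, hL, fun x hx s c hc => ?_⟩
  obtain rfl | hc := hc.eq_or_lt
  · simpa using le_mul_of_one_le_left zero_le (by exact_mod_cast hL)
  obtain rfl | hs := (zero_le (a := s)).eq_or_lt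
  · simp [hφ.zero x hx]
  have hcs := hinc x hx s (c * s) hs (lt_mul_of_one_lt_left hs hc)
  have hC : (c : ℝ≥0∞) ^ p ≠ 0 ∧ (c : ℝ≥0∞) ^ p ≠ ∞ := by
    simp [(zero_lt_one.trans hc).ne', ENNReal.rpow_eq_zero_iff, ENNReal.rpow_eq_top_iff]
  have hS : (s : ℝ≥0∞) ^ p ≠ 0 ∧ (s : ℝ≥0∞) ^ p ≠ ∞ := by
    simp [hs.ne', ENNReal.rpow_eq_zero_iff, ENNReal.rpow_eq_top_iff]
  rw [ENNReal.coe_mul, coe_mul_rpow, ENNReal.div_le_iff hS.1 hS.2] at hcs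
  calc (c : ℝ≥0∞) ^ p * φ x s
    _ ≤ c ^ p * (L * (φ x (c * s) / (c ^ p * s ^ p)) * s ^ p) := by gcongr
    _ = L * (φ x (c * s) / (c ^ p * s ^ p) * (c ^ p * s ^ p)) := by ring
    _ = L * φ x (c * s) := by
      rw [ENNReal.div_mul_cancel (mul_ne_zero hC.1 hS.1) (mul_ne_top hC.2 hS.2)]

theorem ADec.exists_le_rpow_mul {q : ℝ} (h : ADec q Ω φ) (hφ : IsWeakPhi Ω φ) :
    ∃ L : ℝ≥0, 1 ≤ L ∧ ∀ x ∈ Ω, ∀ s c : ℝ≥0, 1 ≤ c →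
      φ x (c * s) ≤ L * (c : ℝ≥0∞) ^ q * φ x s := by
  obtain ⟨L, hL, hdec⟩ := h
  refine ⟨L, hL, fun x hx s c hc => ?_⟩
  obtain rfl | hc := hc.eq_or_lt
  · simpa using le_mul_of_one_le_left zero_le (by exact_mod_cast hL)
  obtain rfl | hs := (zero_le (a := s)).eq_or_lt
  · simp [hφ.zero x hx]
  have hcs := hdec x hx s (c * s) hs (lt_mul_of_one_lt_left hs hc)
  have hC : (c : ℝ≥0∞) ^ q ≠ 0 ∧ (c : ℝ≥0∞) ^ q ≠ ∞ := by
    simp [(zero_lt_one.trans hc).ne', ENNReal.rpow_eq_zero_iff, ENNReal.rpow_eq_top_iff]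
  have hS : (s : ℝ≥0∞) ^ q ≠ 0 ∧ (s : ℝ≥0∞) ^ q ≠ ∞ := by
    simp [hs.ne', ENNReal.rpow_eq_zero_iff, ENNReal.rpow_eq_top_iff]
  rw [ENNReal.coe_mul, coe_mul_rpow,
    ENNReal.div_le_iff (mul_ne_zero hC.1 hS.1) (mul_ne_top hC.2 hS.2)] at hcs
  calc φ x (c * s)
    _ ≤ L * (φ x s / s ^ q) * (c ^ q * s ^ q) := hcs
    _ = L * c ^ q * (φ x s / s ^ q * s ^ q) := by ring
    _ = L * c ^ q * φ x s := by rw [ENNReal.div_mul_cancel hS.1 hS.2]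

theorem IsWeakPhi.aInc_one (hφ : IsWeakPhi Ω φ) : AInc 1 Ω φ := by
  simpa only [AInc, ENNReal.rpow_one] using hφ.almost_inc

theorem IsWeakPhi.exists_mul_le (hφ : IsWeakPhi Ω φ) :
    ∃ L : ℝ≥0, ∀ x ∈ Ω, ∀ s c : ℝ≥0, c ≤ 1 → φ x (c * s) ≤ L * c * φ x s := by
  obtain ⟨L, -, h⟩ := hφ.aInc_one.exists_rpow_mul_le hφ
  refine ⟨L, fun x hx s c hc => ?_⟩
  obtain rfl | hc0 := eq_or_ne c 0
  · simp [hφ.zero x hx]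
  have hcs := h x hx (c * s) c⁻¹ ((one_le_inv₀ (pos_iff_ne_zero.2 hc0)).2 hc)
  rw [ENNReal.rpow_one, inv_mul_cancel_left₀ hc0, ENNReal.coe_inv hc0, mul_comm, ← div_eq_mul_inv,
    ENNReal.div_le_iff (by exact_mod_cast hc0) coe_ne_top] at hcs
  exact hcs.trans_eq (by ring)

/-- `φ⁻¹(x, ·)` has upper growth exponent `s`, uniformly in `x`, with constant `D`: the form in
which `(aInc)_{1/s}` is used. -/
def PhiInvGrowthLE (φ : RSp n → ℝ≥0 → ℝ≥0∞) (s : ℝ) (D : ℝ≥0) : Prop :=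
  ∀ (x : RSp n) ⦃t t' : ℝ≥0∞⦄, t ≠ 0 → t ≠ ∞ → t ≤ t' →
    phiInv φ x t' ≤ D * (t' / t) ^ s * phiInv φ x t

/-- `φ⁻¹(x, ·)` has lower growth exponent `s`, uniformly in `x`, with constant `D`: the form in
which `(aDec)_{1/s}` is used. -/
def PhiInvGrowthGE (φ : RSp n → ℝ≥0 → ℝ≥0∞) (s : ℝ) (D : ℝ≥0) : Prop :=
  ∀ (x : RSp n) ⦃t t' : ℝ≥0∞⦄, t' ≠ ∞ → t ≤ t' →
    phiInv φ x t ≤ D * (t / t') ^ s * phiInv φ x t'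

theorem AInc.exists_phiInvGrowthLE {p : ℝ} (hp : 0 < p) (h : AInc p univ φ)
    (hφ : IsWeakPhi univ φ) : ∃ D : ℝ≥0, PhiInvGrowthLE φ (1 / p) D := by
  obtain ⟨L, hL, hmul⟩ := h.exists_rpow_mul_le hφ
  have hL0 : 0 < L := zero_lt_one.trans_le hL
  refine ⟨L ^ (1 / p), fun x t t' ht0 ht htt' => ?_⟩
  obtain rfl | ht' := eq_or_ne t' ∞
  · rw [top_div_of_ne_top ht, top_rpow_of_pos (by positivity), mul_top (by simp [hL0.ne']),
      top_mul (hφ.phiInv_pos (mem_univ x) ht0).ne']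
    exact le_top
  lift t to ℝ≥0 using ht
  lift t' to ℝ≥0 using ht'
  have ht0 : t ≠ 0 := by exact_mod_cast ht0
  have htt' : t ≤ t' := by exact_mod_cast htt'
  set c : ℝ≥0 := (L * (t' / t)) ^ (1 / p) with hc
  have hc1 : 1 ≤ c := NNReal.one_le_rpow
    (one_le_mul hL ((one_le_div (pos_iff_ne_zero.2 ht0)).2 htt')) (by positivity)
  have hcp : (c : ℝ≥0∞) ^ p = L * (t' / t : ℝ≥0) := by
    rw [← ENNReal.coe_rpow_of_nonneg _ hp.le, hc, one_div, NNReal.rpow_inv_rpow hp.ne',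
      ENNReal.coe_mul]
  rw [← ENNReal.coe_div ht0, ← ENNReal.coe_rpow_of_nonneg _ (by positivity), ← ENNReal.coe_mul,
    ← NNReal.mul_rpow, ← hc]
  refine phiInv_le_mul_of_forall (zero_lt_one.trans_le hc1).ne' fun s hs => ?_
  have hcs : L * ((t' / t : ℝ≥0) * φ x s) ≤ L * φ x (c * s) := by
    simpa only [hcp, mul_assoc] using hmul x (mem_univ x) s c hc1
  calc (t' : ℝ≥0∞) = (t' / t : ℝ≥0) * t := by exact_mod_cast (div_mul_cancel₀ t' ht0).symm
    _ ≤ (t' / t : ℝ≥0) * φ x s := by gcongr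
    _ ≤ φ x (c * s) := (ENNReal.mul_le_mul_iff_right (by simpa using hL0.ne') coe_ne_top).1 hcs

theorem ADec.exists_phiInvGrowthGE {r : ℝ} (hr : 0 < r) (h : ADec (1 / r) univ φ)
    (hφ : IsWeakPhi univ φ) : ∃ D : ℝ≥0, PhiInvGrowthGE φ r D := by
  obtain ⟨L, hL, hmul⟩ := h.exists_le_rpow_mul hφ
  have hL0 : L ≠ 0 := (zero_lt_one.trans_le hL).ne'
  refine ⟨L ^ r, fun x t t' ht' htt' => ?_⟩
  obtain rfl | ht0 := eq_or_ne t 0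
  · simp [phiInv_zero]
  lift t to ℝ≥0 using ne_top_of_le_ne_top ht' htt'
  lift t' to ℝ≥0 using ht'
  have ht0 : t ≠ 0 := by exact_mod_cast ht0
  have htt'' : t ≤ t' := by exact_mod_cast htt'
  have ht0' : t' ≠ 0 := ((pos_iff_ne_zero.2 ht0).trans_le htt'').ne'
  set d : ℝ≥0 := (L * (t / t')) ^ r with hd
  have hd0 : 0 < d := NNReal.rpow_pos (by positivity)
  rw [← ENNReal.coe_div ht0', ← ENNReal.coe_rpow_of_nonneg _ hr.le, ← ENNReal.coe_mul,
    ← NNReal.mul_rpow, ← hd]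
  refine phiInv_le_mul_of_forall hd0.ne' fun s hs => ?_
  obtain hd1 | hd1 := le_total 1 d
  · exact htt'.trans (hs.trans (hφ.mono x (mem_univ x) (le_mul_of_one_le_left zero_le hd1)))
  have hLd : (L : ℝ≥0∞) * ((d⁻¹ : ℝ≥0) : ℝ≥0∞) ^ (1 / r) = (t' / t : ℝ≥0) := by
    rw [← ENNReal.coe_rpow_of_nonneg _ (by positivity), ← ENNReal.coe_mul, NNReal.inv_rpow, hd,
      one_div, NNReal.rpow_rpow_inv hr.ne']
    congr 1
    field_simp
  have hds := hmul x (mem_univ x) (d * s) d⁻¹ ((one_le_inv₀ hd0).2 hd1)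
  rw [inv_mul_cancel_left₀ hd0.ne', hLd] at hds
  refine (ENNReal.mul_le_mul_iff_right (a := (t' / t : ℝ≥0)) (by simp [ht0, ht0'])
    coe_ne_top).1 ?_
  calc ((t' / t : ℝ≥0) : ℝ≥0∞) * t = t' := by exact_mod_cast div_mul_cancel₀ t' ht0
    _ ≤ φ x s := hs
    _ ≤ _ := hds

theorem le_phiE {s : ℝ≥0} {t : ℝ≥0∞} (h : s ≤ t) : φ x s ≤ phiE φ x t :=
  le_iSup₂ (f := fun (s : ℝ≥0) (_ : (s : ℝ≥0∞) ≤ t) => φ x s) s h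

theorem IsWeakPhi.phiE_coe (hφ : IsWeakPhi Ω φ) (hx : x ∈ Ω) (s : ℝ≥0) : phiE φ x s = φ x s :=
  le_antisymm (iSup₂_le fun _ h => hφ.mono x hx (ENNReal.coe_le_coe.1 h)) (le_phiE le_rfl)

theorem phiE_mono (φ : RSp n → ℝ≥0 → ℝ≥0∞) (x : RSp n) : Monotone (phiE φ x) :=
  fun _ _ h => iSup₂_le fun _ hs => le_phiE (hs.trans h)

theorem phiE_le_of_lt_phiInv {g t : ℝ≥0∞} (h : g < phiInv φ x t) : phiE φ x g ≤ t :=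
  iSup₂_le fun _ hs => (lt_of_lt_phiInv (hs.trans_lt h)).le

theorem IsWeakPhi.phiE_div_le_of_le_mul_phiInv (hφ : IsWeakPhi Ω φ) (hx : x ∈ Ω) {C : ℝ≥0}
    (hC : C ≠ 0) {g t : ℝ≥0∞} (ht : t ≠ 0) (h : g ≤ C * phiInv φ x t) :
    phiE φ x (g / (2 * C : ℝ≥0)) ≤ t := by
  obtain rfl | ht' := eq_or_ne t ∞
  · exact le_top
  refine phiE_le_of_lt_phiInv (lt_of_le_of_lt ?_
    (ENNReal.half_lt_self (hφ.phiInv_pos hx ht).ne' (hφ.phiInv_ne_top hx ht')))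
  rw [ENNReal.div_le_iff (by simp [hC]) coe_ne_top]
  refine h.trans_eq ?_
  rw [ENNReal.coe_mul, coe_ofNat, ← mul_assoc, ENNReal.div_mul_cancel two_ne_zero ofNat_ne_top,
    mul_comm]

theorem IsWeakPhi.exists_phiE_mul_le (hφ : IsWeakPhi Ω φ) :
    ∃ L : ℝ≥0, ∀ x ∈ Ω, ∀ (t : ℝ≥0∞) (c : ℝ≥0), c ≠ 0 → c ≤ 1 →
      phiE φ x (c * t) ≤ L * c * phiE φ x t := by
  obtain ⟨L, hL⟩ := hφ.exists_mul_le
  refine ⟨L, fun x hx t c hc0 hc1 => iSup₂_le fun s hs => ?_⟩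
  have hst : ((c⁻¹ * s : ℝ≥0) : ℝ≥0∞) ≤ t := by
    rw [ENNReal.coe_mul, ENNReal.coe_inv hc0, mul_comm, ← div_eq_mul_inv]
    exact ENNReal.div_le_of_le_mul' hs
  calc φ x s = φ x (c * (c⁻¹ * s)) := by rw [mul_inv_cancel_left₀ hc0]
    _ ≤ L * c * φ x (c⁻¹ * s) := hL x hx _ c hc1
    _ ≤ L * c * phiE φ x t := by gcongr; exact le_phiE hst

end PhiFunctions

/-! ### Comparison of inverses at two points of a cube -/

section LevelComparison

variable {n : ℕ} {φ χ : RSp n → ℝ≥0 → ℝ≥0∞}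

theorem exists_pos_le_one_mul_le (a : ℝ≥0) {b : ℝ≥0} (hb : 0 < b) :
    ∃ c : ℝ≥0, 0 < c ∧ c ≤ 1 ∧ a * c ≤ b := by
  refine ⟨min 1 (b / (a + 1)), lt_min one_pos (by positivity), min_le_left _ _, ?_⟩
  calc a * min 1 (b / (a + 1)) ≤ (a + 1) * (b / (a + 1)) := by
        gcongr
        exacts [le_self_add, min_le_right _ _]
    _ = b := mul_div_cancel₀ b (by positivity)

/-- One half of condition `(A2)`: at levels of `φ` up to `s`, the function `χ` is dominated by `φ`
up to the scaling factor `β` and the additive error `h`. -/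
def LowLevelLE (φ χ : RSp n → ℝ≥0 → ℝ≥0∞) (β s : ℝ≥0) (h : RSp n → ℝ≥0∞) : Prop :=
  ∀ᵐ x, ∀ t : ℝ≥0, φ x t ≤ s → χ x (β * t) ≤ φ x t + h x

/-- The error term in `(A2)` is not assumed measurable; the least error that works for rational
arguments is, at the cost of a smaller scaling factor. -/
theorem LowLevelLE.exists_aemeasurable (hφ : IsWeakPhi univ φ) (hχ : IsWeakPhi univ χ)
    {β s : ℝ≥0} {h : RSp n → ℝ≥0∞} (H : LowLevelLE φ χ β s h) :
    ∃ g : RSp n → ℝ≥0∞, AEMeasurable g ∧ g ≤ᵐ[volume] h ∧ LowLevelLE φ χ (β / 2) s g := by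
  have meas {θ : RSp n → ℝ≥0 → ℝ≥0∞} (hθ : IsWeakPhi univ θ) (c : ℝ≥0) :
      AEMeasurable fun x => θ x c := by
    simpa using hθ.meas (fun _ => c) measurable_const
  let u (q : ℚ) : ℝ≥0 := Real.toNNReal q
  let g (q : ℚ) : RSp n → ℝ≥0∞ :=
    {x | φ x (u q) ≤ s}.indicator fun x => χ x (β * u q) - φ x (u q)
  refine ⟨fun x => ⨆ q, g q x, .iSup fun q => ?_, ?_, .of_forall fun x t ht => ?_⟩
  · exact ((meas hχ _).sub (meas hφ _)).indicator₀
      ((meas hφ (u q)).nullMeasurableSet_preimage measurableSet_Iic)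
  · filter_upwards [H] with x hx
    exact iSup_le fun q => indicator_apply_le fun hq => tsub_le_iff_left.2 (hx (u q) hq)
  obtain rfl | ht0 := (zero_le (a := t)).eq_or_lt
  · simp [hχ.zero x]
  obtain ⟨q, hq₁, hq₂⟩ := exists_rat_btwn (show ((t / 2 : ℝ≥0) : ℝ) < t by
    exact_mod_cast half_lt_self ht0)
  have hqt : u q ≤ t := Real.toNNReal_le_iff_le_coe.2 hq₂.le
  have htq : β / 2 * t ≤ β * u q := by
    calc β / 2 * t = β * (t / 2) := by ring
      _ ≤ β * u q := by gcongr; exact NNReal.le_toNNReal_of_coe_le hq₁.le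
  have hφq : φ x (u q) ≤ φ x t := hφ.mono x (mem_univ x) hqt
  have hgq : χ x (β * u q) ≤ φ x (u q) + g q x :=
    tsub_le_iff_left.1 (indicator_of_mem (s := {x | φ x (u q) ≤ s}) (hφq.trans ht)
      fun x => χ x (β * u q) - φ x (u q)).ge
  calc χ x (β / 2 * t) ≤ χ x (β * u q) := hχ.mono x (mem_univ x) htq
    _ ≤ φ x (u q) + g q x := hgq
    _ ≤ φ x t + ⨆ q, g q x := by gcongr; exact le_iSup (fun q => g q x) q

theorem IsWeakPhi.exists_phiInv_le_mul (hφ : IsWeakPhi univ φ) (hχ : IsWeakPhi univ χ)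
    {β s : ℝ≥0} (hβ : 0 < β) (hs : 0 < s) (M : ℝ≥0) :
    ∃ K : ℝ≥0, ∀ x y h t, (∀ u : ℝ≥0, φ x u ≤ s → χ y (β * u) ≤ φ x u + h) → h ≤ M * t → t ≤ 1 →
      phiInv φ x t ≤ K * phiInv χ y t := by
  obtain ⟨Lφ, hLφ⟩ := hφ.exists_mul_le
  obtain ⟨Lχ, hLχ⟩ := hχ.exists_mul_le
  obtain ⟨l, hl₀, hl₁, hl⟩ := exists_pos_le_one_mul_le Lφ (lt_min hs one_pos)
  obtain ⟨k, hk₀, hk₁, hk⟩ := exists_pos_le_one_mul_le (Lχ * (1 + M)) one_half_pos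
  refine ⟨(k * (β * l))⁻¹, fun x y h t hu ht ht1 => ?_⟩
  obtain rfl | ht0 := eq_or_ne t 0
  · simp [phiInv_zero]
  refine phiInv_le_mul_of_forall (by positivity) fun σ hσ => ?_
  by_contra! hlt
  set v := (k * (β * l))⁻¹ * σ with hv
  have hσv : σ = k * (β * (l * v)) := by rw [hv]; field_simp
  have hφv : φ x (l * v) ≤ (min s 1 : ℝ≥0) * t := by
    calc φ x (l * v) ≤ (Lφ * l : ℝ≥0) * φ x v := by exact_mod_cast hLφ x (mem_univ x) v l hl₁
      _ ≤ (min s 1 : ℝ≥0) * t := by gcongr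
  have hφs : φ x (l * v) ≤ s := hφv.trans <| by
    calc ((min s 1 : ℝ≥0) : ℝ≥0∞) * t ≤ s * 1 := by gcongr; exact min_le_left _ _
      _ = s := mul_one _
  have hφt : φ x (l * v) ≤ t := hφv.trans <| by
    calc ((min s 1 : ℝ≥0) : ℝ≥0∞) * t ≤ (1 : ℝ≥0) * t := by gcongr; exact min_le_right _ _
      _ = t := by simp
  have hχσ : χ y σ ≤ t / 2 := by
    calc χ y σ ≤ Lχ * k * χ y (β * (l * v)) := hσv ▸ hLχ y (mem_univ y) _ k hk₁
      _ ≤ Lχ * k * (t + M * t) := by gcongr; exact (hu _ hφs).trans (add_le_add hφt ht)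
      _ = (Lχ * (1 + M) * k : ℝ≥0) * t := by push_cast; ring
      _ ≤ (1 / 2 : ℝ≥0) * t := by gcongr
      _ = t / 2 := by simp [div_eq_mul_inv, mul_comm]
  exact (ENNReal.half_lt_self ht0 (ne_top_of_le_ne_top one_ne_top ht1)).not_ge (hσ.trans hχσ)

/-- The majorant is kept positive, so that its averages over cubes never vanish. -/
theorem exists_measurable_majorant {α : Type*} [MeasurableSpace α] {μ : Measure α} [SigmaFinite μ]
    {g : α → ℝ≥0∞} (hg : AEMeasurable g μ) (hgI : ∫⁻ x, g x ∂μ ≠ ∞) {M₀ : ℝ≥0}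
    (hgM : ∀ᵐ x ∂μ, g x ≤ M₀) {ε : ℝ≥0} (hε : 0 < ε) :
    ∃ H : α → ℝ≥0∞, Measurable H ∧ (∀ x, 0 < H x) ∧ (∀ x, H x ≤ 1 / 2) ∧ ∫⁻ x, H x ∂μ ≤ ε ∧
      ∃ M : ℝ≥0, ∀ᵐ x ∂μ, g x ≤ M * H x := by
  obtain ⟨w, hw₀, hwm, hwI⟩ :=
    exists_pos_lintegral_lt_of_sigmaFinite μ (ε := (ε / 2 : ℝ≥0)) (by simpa using hε.ne')
  lift ∫⁻ x, g x ∂μ to ℝ≥0 using hgI with I hI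
  obtain ⟨c, hc₀, -, hc⟩ := exists_pos_le_one_mul_le (I + M₀) (lt_min one_half_pos (half_pos hε))
  have hcI : c * I ≤ ε / 2 := by
    calc c * I ≤ (I + M₀) * c := by rw [mul_comm]; gcongr; exact le_self_add
      _ ≤ ε / 2 := hc.trans (min_le_right _ _)
  have hcM : c * M₀ ≤ 1 / 2 := by
    calc c * M₀ ≤ (I + M₀) * c := by rw [mul_comm]; gcongr; exact le_add_self
      _ ≤ 1 / 2 := hc.trans (min_le_left _ _)
  have hGm : Measurable fun x => c * hg.mk g x := hg.measurable_mk.const_mul _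
  refine ⟨fun x => min (c * hg.mk g x + w x) (1 / 2), (hGm.add hwm.coe_nnreal_ennreal).min
    measurable_const, fun x => lt_min (by simp [hw₀ x]) (by simp), fun x => min_le_right _ _,
    ?_, c⁻¹, ?_⟩
  · calc ∫⁻ x, min (c * hg.mk g x + w x) (1 / 2) ∂μ
      _ ≤ ∫⁻ x, (c * hg.mk g x + w x) ∂μ := lintegral_mono fun x => min_le_left _ _
      _ = (c * I : ℝ≥0) + ∫⁻ x, w x ∂μ := by
        rw [lintegral_add_left hGm, lintegral_const_mul _ hg.measurable_mk,
          lintegral_congr_ae hg.ae_eq_mk.symm, ← hI, ENNReal.coe_mul]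
      _ ≤ (ε / 2 : ℝ≥0) + (ε / 2 : ℝ≥0) := by gcongr
      _ = ε := by rw [← ENNReal.coe_add, add_halves]
  · filter_upwards [hg.ae_eq_mk, hgM] with x hx hxM
    have hcg : c * g x ≤ 1 / 2 := by
      calc c * g x ≤ (c * M₀ : ℝ≥0) := by rw [ENNReal.coe_mul]; gcongr
        _ ≤ (1 / 2 : ℝ≥0) := by gcongr
        _ = 1 / 2 := by simp
    calc g x = (c⁻¹ : ℝ≥0) * (c * g x) := by
          rw [← mul_assoc, ← ENNReal.coe_mul, inv_mul_cancel₀ hc₀.ne', ENNReal.coe_one, one_mul]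
      _ ≤ (c⁻¹ : ℝ≥0) * min (c * hg.mk g x + w x) (1 / 2) := by
        gcongr
        exact le_min (by rw [← hx]; exact le_self_add) hcg

theorem A2.exists_phiInv_le_mul (h₂ : A2 φ) (hφ : IsWeakPhi univ φ) {ε : ℝ≥0} (hε : 0 < ε) :
    ∃ H : RSp n → ℝ≥0∞, Measurable H ∧ (∀ x, 0 < H x) ∧ (∀ x, H x ≤ 1 / 2) ∧ ∫⁻ x, H x ≤ ε ∧
      ∃ K : ℝ≥0, ∃ S ∈ ae volume, ∀ x ∈ S, ∀ y ∈ S, ∀ t ≤ 1, H x ≤ t → H y ≤ t →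
        phiInv φ x t ≤ K * phiInv φ y t := by
  obtain ⟨φi, hφi, h, hhI, ⟨M₀, hM₀⟩, β, hβ, -, s, hs, hA⟩ := h₂
  have hlow₁ : LowLevelLE φ (fun _ => φi) β s h := hA.mono fun x hx t => (hx t).2
  have hlow₂ : LowLevelLE (fun _ => φi) φ β s h := hA.mono fun x hx t => (hx t).1
  obtain ⟨g₁, hg₁, hgh₁, hlow₁⟩ := hlow₁.exists_aemeasurable hφ hφi
  obtain ⟨g₂, hg₂, hgh₂, hlow₂⟩ := hlow₂.exists_aemeasurable hφi hφ
  have hgh : ∀ᵐ x, max (g₁ x) (g₂ x) ≤ h x := by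
    filter_upwards [hgh₁, hgh₂] with x h₁ h₂ using max_le h₁ h₂
  obtain ⟨H, hHm, hH₀, hH₁, hHI, M, hM⟩ := exists_measurable_majorant (hg₁.max hg₂)
    ((lintegral_mono_ae hgh).trans_lt hhI).ne
    (by filter_upwards [hgh, hM₀] with x h₁ h₂ using h₁.trans h₂) hε
  obtain ⟨K₁, hK₁⟩ := hφ.exists_phiInv_le_mul hφi (half_pos hβ) hs M
  obtain ⟨K₂, hK₂⟩ := hφi.exists_phiInv_le_mul hφ (half_pos hβ) hs M
  refine ⟨H, hHm, hH₀, hH₁, hHI, K₁ * K₂, _, hlow₁.and (hlow₂.and hM), ?_⟩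
  rintro x ⟨hx, -, hxM⟩ y ⟨-, hy, hyM⟩ t ht hxt hyt
  calc phiInv φ x t ≤ K₁ * phiInv (fun _ => φi) y t :=
        hK₁ x y (g₁ x) t hx ((le_max_left _ _).trans (hxM.trans (by gcongr))) ht
    _ ≤ K₁ * (K₂ * phiInv φ y t) := by
        gcongr
        exact hK₂ y y (g₂ y) t hy ((le_max_right _ _).trans (hyM.trans (by gcongr))) ht
    _ = (K₁ * K₂ : ℝ≥0) * phiInv φ y t := by rw [ENNReal.coe_mul, mul_assoc]

theorem ae_mul_le_essInf_and_essInf_le {α : Type*} [MeasurableSpace α] {μ : Measure α}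
    {f : α → ℝ≥0∞} {β : ℝ≥0∞} (h : ∀ᵐ x ∂μ, ∀ᵐ y ∂μ, β * f x ≤ f y) :
    ∀ᵐ x ∂μ, β * f x ≤ essInf f μ ∧ essInf f μ ≤ f x := by
  filter_upwards [h, ae_essInf_le (f := f) (μ := μ)] with x hx hx_le
  exact ⟨le_essInf_of_ae_le _ hx, hx_le⟩

/-- Through the essential infimum over a cube, the condition `(A1)`, which concerns almost all
pairs of points of each single cube, holds off one null set for all rational cubes. -/
theorem A1.exists_ae_forall_ratCube (h₁ : A1 φ) :
    ∃ β : ℝ≥0, 0 < β ∧ ∃ S ∈ ae volume, ∀ x ∈ S, ∀ y ∈ S, ∀ c r (k : ℕ), 1 ≤ k →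
      k * volume (ratCube (n := n) c r).set ≤ 1 → x ∈ (ratCube c r).set → y ∈ (ratCube c r).set →
        β * phiInv φ x k ≤ phiInv φ y k := by
  obtain ⟨β, hβ, -, hA⟩ := h₁
  have key : ∀ᵐ x, ∀ (c : Fin n → ℚ) (r : {r : ℚ // 0 < r}) (k : ℕ), 1 ≤ k →
      k * volume (ratCube c r).set ≤ 1 → x ∈ (ratCube c r).set →
        β * phiInv φ x k ≤ essInf (phiInv φ · k) (volume.restrict (ratCube c r).set) ∧
          essInf (phiInv φ · k) (volume.restrict (ratCube c r).set) ≤ phiInv φ x k := by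
    simp only [ae_all_iff]
    intro c r k hk hkv
    have hk' : (1 : ℝ≥0∞) ≤ k := by exact_mod_cast hk
    rw [← ae_restrict_iff' (Cube.measurableSet_set _)]
    refine ae_mul_le_essInf_and_essInf_le ?_
    filter_upwards [hA _ ((le_mul_of_one_le_left zero_le hk').trans hkv)] with x hx
    filter_upwards [hx] with y hy
    exact hy k hk' (ENNReal.le_inv_iff_mul_le.2 hkv)
  exact ⟨β, hβ, _, key, fun x hx y hy c r k hk hkv hxQ hyQ =>
    (hx c r k hk hkv hxQ).1.trans (hy c r k hk hkv hyQ).2⟩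

theorem A1.exists_phiInv_le_mul (h₁ : A1 φ) {s : ℝ} (hs : 0 ≤ s) {D : ℝ≥0}
    (hD : PhiInvGrowthLE φ s D) :
    ∃ K : ℝ≥0, ∃ S ∈ ae volume, ∀ x ∈ S, ∀ y ∈ S, ∀ Q : Cube n, x ∈ Q.set → y ∈ Q.set →
      ∀ t, 1 ≤ t → t * (2 ^ n * volume Q.set) ≤ 1 → phiInv φ x t ≤ K * phiInv φ y t := by
  obtain ⟨β, hβ, S, hS, hA⟩ := h₁.exists_ae_forall_ratCube
  refine ⟨D * 2 ^ s * β⁻¹, S, hS, fun x hx y hy Q hxQ hyQ t ht htQ => ?_⟩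
  obtain ⟨c, r, hsub, hvol⟩ := Q.exists_subset_ratCube
  have htop : t ≠ ∞ := by
    rintro rfl
    simp [top_mul, Q.volume_set_ne_zero] at htQ
  lift t to ℝ≥0 using htop
  have hk₁ : 1 ≤ ⌊t⌋₊ := Nat.le_floor (by exact_mod_cast ht)
  have hkt : (⌊t⌋₊ : ℝ≥0∞) ≤ t := by exact_mod_cast Nat.floor_le (zero_le (a := t))
  have htk : (t : ℝ≥0∞) ≤ 2 * ⌊t⌋₊ := by
    have h₁ : t ≤ ⌊t⌋₊ + 1 := (Nat.lt_floor_add_one t).le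
    have h₂ : (1 : ℝ≥0) ≤ ⌊t⌋₊ := by exact_mod_cast hk₁
    exact_mod_cast h₁.trans ((add_le_add_right h₂ _).trans_eq (two_mul _).symm)
  have hkv : ⌊t⌋₊ * volume (ratCube c r).set ≤ 1 := by
    calc ⌊t⌋₊ * volume (ratCube c r).set ≤ t * (2 ^ n * volume Q.set) := by gcongr
      _ ≤ 1 := htQ
  have hk₀ : (⌊t⌋₊ : ℝ≥0∞) ≠ 0 := by exact_mod_cast (zero_lt_one.trans_le hk₁).ne'
  have hxy : phiInv φ x ⌊t⌋₊ ≤ (β : ℝ≥0∞)⁻¹ * phiInv φ y ⌊t⌋₊ := by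
    rw [mul_comm, ← div_eq_mul_inv,
      ENNReal.le_div_iff_mul_le (.inl (by exact_mod_cast hβ.ne')) (.inl coe_ne_top), mul_comm]
    exact hA x hx y hy c r _ hk₁ hkv (hsub hxQ) (hsub hyQ)
  calc phiInv φ x t
    _ ≤ D * (t / ⌊t⌋₊) ^ s * phiInv φ x ⌊t⌋₊ := hD x hk₀ (natCast_ne_top _) hkt
    _ ≤ D * 2 ^ s * ((β : ℝ≥0∞)⁻¹ * phiInv φ y t) := by
      gcongr
      · exact ENNReal.div_le_of_le_mul htk
      · exact hxy.trans (by gcongr; exact phiInv_mono φ y hkt)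
    _ = (D * 2 ^ s * β⁻¹ : ℝ≥0) * phiInv φ y t := by
      rw [ENNReal.coe_mul, ENNReal.coe_mul, ENNReal.coe_inv hβ.ne',
        ENNReal.coe_rpow_of_nonneg _ hs, coe_ofNat]
      ring

/-- The outcome of `(A1)` and `(A2)`: off a null set, the inverses of `φ` at two points of a cube
`Q` are comparable at every level that is at least the error `H` at both points and at most `1` or
`(2ⁿ |Q|)⁻¹`. The positive error `H` has integral at most `ε`. -/
structure LevelComparison (φ : RSp n → ℝ≥0 → ℝ≥0∞) (ε : ℝ≥0) (H : RSp n → ℝ≥0∞) (K : ℝ≥0)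
    (S : Set (RSp n)) : Prop where
  measurable : Measurable H
  pos : ∀ x, 0 < H x
  le_half : ∀ x, H x ≤ 1 / 2
  lintegral_le : ∫⁻ x, H x ≤ ε
  one_le : 1 ≤ K
  mem_ae : S ∈ ae volume
  phiInv_le : ∀ x ∈ S, ∀ y ∈ S, ∀ Q : Cube n, x ∈ Q.set → y ∈ Q.set → ∀ t, H x ≤ t → H y ≤ t →
    (t ≤ 1 ∨ t * (2 ^ n * volume Q.set) ≤ 1) → phiInv φ x t ≤ K * phiInv φ y t

theorem exists_levelComparison (hφ : IsWeakPhi univ φ) (h₁ : A1 φ) (h₂ : A2 φ) {s : ℝ}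
    (hs : 0 ≤ s) {D : ℝ≥0} (hD : PhiInvGrowthLE φ s D) {ε : ℝ≥0} (hε : 0 < ε) :
    ∃ H K S, LevelComparison φ ε H K S := by
  obtain ⟨H, hHm, hH₀, hH₁, hHI, K₂, S₂, hS₂, hK₂⟩ := h₂.exists_phiInv_le_mul hφ hε
  obtain ⟨K₁, S₁, hS₁, hK₁⟩ := h₁.exists_phiInv_le_mul hs hD
  refine ⟨H, max 1 (max K₁ K₂), S₁ ∩ S₂, hHm, hH₀, hH₁, hHI, le_max_left _ _,
    inter_mem hS₁ hS₂, fun x hx y hy Q hxQ hyQ t hxt hyt ht => ?_⟩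
  by_cases ht1 : t ≤ 1
  · refine (hK₂ x hx.2 y hy.2 t ht1 hxt hyt).trans ?_
    gcongr
    exact (le_max_right _ _).trans (le_max_right _ _)
  · refine (hK₁ x hx.1 y hy.1 Q hxQ hyQ t (not_le.1 ht1).le (ht.resolve_left ht1)).trans ?_
    gcongr
    exact (le_max_left _ _).trans (le_max_right _ _)

end LevelComparison

/-! ### The estimate on a single cube -/

section SingleCube

variable {n : ℕ} {φ ψ : RSp n → ℝ≥0 → ℝ≥0∞} {x y z : RSp n} {γ r s P : ℝ} {D K : ℝ≥0}
  {a h : ℝ≥0∞}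

theorem add_le_one_or_add_mul_le_one {W : ℝ≥0∞} (hh : h ≤ 1 / 2) (ha : a * W ≤ 1 / 2) :
    a + h ≤ 1 ∨ (a + h) * W ≤ 1 := by
  obtain h₁ | h₁ := le_total a (1 / 2)
  · exact .inl ((add_le_add h₁ hh).trans_eq (ENNReal.add_halves 1))
  · refine .inr ?_
    calc (a + h) * W ≤ (a + a) * W := by gcongr; exact hh.trans h₁
      _ ≤ 1 / 2 + 1 / 2 := by rw [add_mul]; gcongr
      _ = 1 := ENNReal.add_halves 1

theorem FracInvRel.exists_phiInv_le_mul {α : ℝ} (h : FracInvRel α φ ψ) :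
    ∃ c : ℝ≥0, ∀ x t, t ≠ 0 → t ≠ ∞ → phiInv φ x t ≤ c * (t ^ (α / n) * phiInv ψ x t) := by
  obtain ⟨_, c, -, hc⟩ := h
  refine ⟨c, fun x t ht₀ ht => ?_⟩
  lift t to ℝ≥0 using ht
  exact (hc x t (by simpa [pos_iff_ne_zero] using ht₀)).2

theorem div_rpow_mul_div_rpow {b c : ℝ≥0∞} (hb₀ : b ≠ 0) (hb : b ≠ ∞) (hs : 0 ≤ s) :
    (a / b) ^ s * (b / c) ^ s = (a / c) ^ s := by
  rw [← ENNReal.mul_rpow_of_nonneg _ _ hs, ← mul_div_assoc, ENNReal.div_mul_cancel hb₀ hb]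

/-- Comparing the inverses at `y` and `z` only at the level `a + h` bounds every argument at `y` by
the inverse at `z`: one rescales at `y` up to the level of the argument and at `z` down to `a`. -/
theorem IsWeakPhi.le_mul_phiInv (hφ : IsWeakPhi univ φ) (hs : 0 ≤ s) (hD : PhiInvGrowthLE φ s D)
    (ha₀ : a ≠ 0) (ha : a ≠ ∞) (hh : h ≠ ∞)
    (hK : phiInv φ y (a + h) ≤ K * phiInv φ z (a + h)) {σ : ℝ≥0} (hσ : φ y σ ≠ ∞) :
    σ ≤ D * D * K * phiInv φ z a * ((φ y σ + h) / a + 1) ^ s := by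
  have hah₀ : a + h ≠ 0 := by simp [ha₀]
  have hah : a + h ≠ ∞ := by finiteness
  calc (σ : ℝ≥0∞) ≤ phiInv φ y (φ y σ + (a + h)) :=
        hφ.le_phiInv_of_lt (mem_univ y) (ENNReal.lt_add_right hσ hah₀)
    _ ≤ D * ((φ y σ + (a + h)) / (a + h)) ^ s * phiInv φ y (a + h) := hD y hah₀ hah le_add_self
    _ ≤ D * ((φ y σ + (a + h)) / (a + h)) ^ s * (K * (D * ((a + h) / a) ^ s * phiInv φ z a)) := by
      gcongr
      exact hK.trans (by gcongr; exact hD z ha₀ ha le_self_add)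
    _ = D * D * K * phiInv φ z a *
        (((φ y σ + (a + h)) / (a + h)) ^ s * ((a + h) / a) ^ s) := by ring
    _ = D * D * K * phiInv φ z a * ((φ y σ + h) / a + 1) ^ s := by
      rw [div_rpow_mul_div_rpow hah₀ hah hs, add_left_comm, ENNReal.add_div, add_comm (a / a),
        ENNReal.div_self ha₀ ha]

theorem mul_rpow_neg_mul_div_rpow_mul_rpow_le_one (hγr : γ < r) {B t : ℝ≥0∞}
    (hB₀ : B ≠ 0) (hB : B ≠ ∞) (ha₀ : a ≠ 0) (ht : t ≠ ∞) (h : B ^ (1 / (r - γ)) * a ≤ t) :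
    B * a ^ (-γ) * ((a / t) ^ r * t ^ γ) ≤ 1 := by
  have hδ : 0 < r - γ := sub_pos.2 hγr
  have hBm₀ : B ^ (1 / (r - γ)) ≠ 0 := by simp [ENNReal.rpow_eq_zero_iff, hB₀, hB]
  have hBm : B ^ (1 / (r - γ)) ≠ ∞ := by simp [ENNReal.rpow_eq_top_iff, hB₀, hB]
  have ht₀ : t ≠ 0 := ((ENNReal.mul_pos hBm₀ ha₀).trans_le h).ne'
  have ha : a ≠ ∞ := by
    rintro rfl
    exact ht (top_le_iff.1 (by rwa [mul_top hBm₀] at h))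
  have hat₀ : a / t ≠ 0 := by simp [ha₀, ht]
  have hat : a / t ≠ ∞ := div_ne_top ha ht₀
  have hratio : (a / t) ^ (r - γ) ≤ B⁻¹ := by
    rw [← ENNReal.rpow_le_rpow_iff (one_div_pos.2 hδ), ← ENNReal.rpow_mul,
      mul_one_div_cancel hδ.ne', ENNReal.rpow_one, ENNReal.inv_rpow]
    refine ENNReal.div_le_of_le_mul ?_
    rw [mul_comm, ← div_eq_mul_inv, ENNReal.le_div_iff_mul_le (.inl hBm₀) (.inl hBm), mul_comm]
    exact h
  have hcancel : a ^ (-γ) * ((a / t) ^ γ * t ^ γ) = 1 := by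
    rw [← ENNReal.mul_rpow_of_ne_top hat ht, ENNReal.div_mul_cancel ht₀ ht,
      ← ENNReal.rpow_add _ _ ha₀ ha, neg_add_cancel, ENNReal.rpow_zero]
  calc B * a ^ (-γ) * ((a / t) ^ r * t ^ γ)
    _ = B * (a / t) ^ (r - γ) * (a ^ (-γ) * ((a / t) ^ γ * t ^ γ)) := by
      rw [← sub_add_cancel r γ, ENNReal.rpow_add _ _ hat₀ hat, add_sub_cancel_right]
      ring
    _ ≤ B * B⁻¹ * 1 := by rw [hcancel]; gcongr
    _ = 1 := by rw [ENNReal.mul_inv_cancel hB₀ hB, mul_one]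

/-- The gap between the growth exponent `r` and the fractional exponent `γ` absorbs the weight `B`
into the level, at which it becomes the power `1 / (r - γ)`. -/
theorem mul_rpow_neg_mul_phiInv_le (hγ : 0 ≤ γ) (hγr : γ < r) (hD : PhiInvGrowthGE φ r D)
    {c : ℝ≥0} (hψ : ∀ t, t ≠ 0 → t ≠ ∞ → phiInv φ x t ≤ c * (t ^ γ * phiInv ψ x t))
    {B : ℝ≥0∞} (hB₁ : 1 ≤ B) (hB : B ≠ ∞) (ha₀ : a ≠ 0) (ha : a ≠ ∞) (hh : h ≠ ∞)
    (hK : phiInv φ z (a + h) ≤ K * phiInv φ x (a + h)) :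
    B * a ^ (-γ) * phiInv φ z a ≤
      D * D * K * c * phiInv ψ x (B ^ (1 / (r - γ)) * a + h) := by
  have hr : 0 ≤ r := hγ.trans hγr.le
  have hδ : 0 < 1 / (r - γ) := one_div_pos.2 (sub_pos.2 hγr)
  have hah₀ : a + h ≠ 0 := by simp [ha₀]
  set t := B ^ (1 / (r - γ)) * a + h with ht_def
  have ht : t ≠ ∞ := add_ne_top.2 ⟨mul_ne_top (rpow_ne_top_of_nonneg hδ.le hB) ha, hh⟩
  have hat : a + h ≤ t := by
    rw [ht_def]
    gcongr
    exact le_mul_of_one_le_left zero_le (ENNReal.one_le_rpow hB₁ hδ)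
  have ht₀ : t ≠ 0 := ((pos_iff_ne_zero.2 hah₀).trans_le hat).ne'
  calc B * a ^ (-γ) * phiInv φ z a
    _ ≤ B * a ^ (-γ) * (D * (a / (a + h)) ^ r * (K *
        (D * ((a + h) / t) ^ r * (c * (t ^ γ * phiInv ψ x t))))) := by
      gcongr
      refine (hD z (by finiteness : a + h ≠ ∞) le_self_add).trans ?_
      gcongr
      refine hK.trans ?_
      gcongr
      exact (hD x ht hat).trans (by gcongr; exact hψ t ht₀ ht)
    _ = D * D * K * c * phiInv ψ x t *
        (B * a ^ (-γ) * ((a / (a + h)) ^ r * ((a + h) / t) ^ r * t ^ γ)) := by ring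
    _ = D * D * K * c * phiInv ψ x t * (B * a ^ (-γ) * ((a / t) ^ r * t ^ γ)) := by
      rw [div_rpow_mul_div_rpow hah₀ (by finiteness) hr]
    _ ≤ D * D * K * c * phiInv ψ x t * 1 := by
      gcongr
      exact mul_rpow_neg_mul_div_rpow_mul_rpow_le_one hγr (zero_lt_one.trans_le hB₁).ne' hB ha₀ ht
        le_self_add
    _ = _ := mul_one _

theorem enorm_sub_le_one_add_mul_one_add (u v c : ℝ) :
    ‖u - v‖ₑ ≤ (1 + ‖u - c‖ₑ) * (1 + ‖v - c‖ₑ) := by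
  calc ‖u - v‖ₑ = ‖(u - c) - (v - c)‖ₑ := by rw [sub_sub_sub_cancel_right]
    _ ≤ ‖u - c‖ₑ + ‖v - c‖ₑ := enorm_sub_le
    _ ≤ (‖u - c‖ₑ + ‖v - c‖ₑ) + (1 + ‖u - c‖ₑ * ‖v - c‖ₑ) := le_self_add
    _ = (1 + ‖u - c‖ₑ) * (1 + ‖v - c‖ₑ) := by ring

theorem lintegral_enorm_sub_mul_le {Ω : Type*} [MeasurableSpace Ω] {μ : Measure Ω}
    (hs : s.HolderConjugate P) {b f : Ω → ℝ} (hb : AEMeasurable b μ) {g : Ω → ℝ≥0∞}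
    (hg : AEMeasurable g μ) {Λ : ℝ≥0∞} (hf : ∀ᵐ y ∂μ, ‖f y‖ₑ ≤ Λ * g y) (u c : ℝ) :
    ∫⁻ y, ‖u - b y‖ₑ * ‖f y‖ₑ ∂μ ≤ (1 + ‖u - c‖ₑ) * Λ *
      ((∫⁻ y, (1 + ‖b y - c‖ₑ) ^ s ∂μ) ^ (1 / s) * (∫⁻ y, g y ^ P ∂μ) ^ (1 / P)) := by
  have hbm : AEMeasurable (fun y => 1 + ‖b y - c‖ₑ) μ := (hb.sub_const c).enorm.const_add 1
  calc ∫⁻ y, ‖u - b y‖ₑ * ‖f y‖ₑ ∂μ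
    _ ≤ ∫⁻ y, (1 + ‖u - c‖ₑ) * Λ * ((1 + ‖b y - c‖ₑ) * g y) ∂μ := by
      refine lintegral_mono_ae ?_
      filter_upwards [hf] with y hy
      calc ‖u - b y‖ₑ * ‖f y‖ₑ ≤ (1 + ‖u - c‖ₑ) * (1 + ‖b y - c‖ₑ) * (Λ * g y) :=
            mul_le_mul' (enorm_sub_le_one_add_mul_one_add u (b y) c) hy
        _ = _ := by ring
    _ = (1 + ‖u - c‖ₑ) * Λ * ∫⁻ y, (1 + ‖b y - c‖ₑ) * g y ∂μ :=
      lintegral_const_mul'' _ (hbm.mul hg)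
    _ ≤ _ := by
      gcongr
      exact ENNReal.lintegral_mul_le_Lp_mul_Lq μ hs hbm hg

theorem lintegral_rpow_div_rpow_add_one_rpow_le_two {Ω : Type*} [MeasurableSpace Ω]
    {μ : Measure Ω} [IsProbabilityMeasure μ] (hP : 1 ≤ P) {G : Ω → ℝ≥0∞} (hG : Measurable G)
    (h₀ : ∫⁻ y, G y ∂μ ≠ 0) (ht : ∫⁻ y, G y ∂μ ≠ ∞) :
    ∫⁻ y, (G y ^ P / (∫⁻ y, G y ∂μ) ^ P + 1) ^ (1 / P) ∂μ ≤ 2 := by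
  have hP₀ : 0 < P := by linarith
  calc ∫⁻ y, (G y ^ P / (∫⁻ y, G y ∂μ) ^ P + 1) ^ (1 / P) ∂μ
    _ ≤ ∫⁻ y, (G y / (∫⁻ y, G y ∂μ) + 1) ∂μ := by
      refine lintegral_mono fun y => (ENNReal.rpow_add_le_add_rpow _ _ (by positivity)
        ((div_le_one hP₀).2 hP)).trans_eq ?_
      rw [← ENNReal.div_rpow_of_nonneg _ _ hP₀.le, ← ENNReal.rpow_mul, mul_one_div_cancel hP₀.ne',
        ENNReal.rpow_one, ENNReal.one_rpow]
    _ = 2 := by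
      rw [lintegral_add_right _ measurable_const, lintegral_const, measure_univ, mul_one]
      simp_rw [div_eq_mul_inv]
      rw [lintegral_mul_const _ hG, ENNReal.mul_inv_cancel h₀ ht, one_add_one_eq_two]

theorem Cube.exists_mem_le_laverage (Q : Cube n) {G : RSp n → ℝ≥0∞} (hG : Measurable G)
    {S : Set (RSp n)} (hS : S ∈ ae volume) :
    ∃ y ∈ Q.set, y ∈ S ∧ G y ≤ ⨍⁻ y in Q.set, G y ∂volume := by
  have hpos := measure_le_setLAverage_pos Q.volume_set_ne_zero Q.volume_set_ne_top hG.aemeasurable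
  obtain ⟨y, ⟨hyQ, hy⟩, hyS⟩ := ((frequently_ae_iff.2 hpos.ne').and_eventually hS).exists
  exact ⟨y, hyQ, hyS, hy⟩

theorem Cube.volume_rpow_sub_one_mul_lintegral (Q : Cube n) (γ : ℝ) (F : RSp n → ℝ≥0∞) :
    volume Q.set ^ (γ - 1) * ∫⁻ y in Q.set, F y =
      volume Q.set ^ γ * ⨍⁻ y in Q.set, F y ∂volume := by
  rw [← Q.volume_mul_laverage, ← mul_assoc]
  congr 1
  conv_lhs => enter [2]; rw [← ENNReal.rpow_one (volume Q.set)]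
  rw [← ENNReal.rpow_add _ _ Q.volume_set_ne_zero Q.volume_set_ne_top, sub_add_cancel]

variable {ε : ℝ≥0} {H G : RSp n → ℝ≥0∞} {S : Set (RSp n)} {Q : Cube n} {b f : RSp n → ℝ}

theorem LevelComparison.phiInv_add_le (hL : LevelComparison φ ε H K S) (hx : x ∈ S) (hy : y ∈ S)
    (hxQ : x ∈ Q.set) (hyQ : y ∈ Q.set) (hHx : H x ≤ a + h) (hHy : H y ≤ a + h) (hh : h ≤ 1 / 2)
    (ha : a * (2 ^ n * volume Q.set) ≤ 1 / 2) :
    phiInv φ x (a + h) ≤ K * phiInv φ y (a + h) :=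
  hL.phiInv_le x hx y hy Q hxQ hyQ _ hHx hHy (add_le_one_or_add_mul_le_one hh ha)

theorem LevelComparison.ae_enorm_le (hL : LevelComparison φ ε H K S) (hφ : IsWeakPhi univ φ)
    (hs : 0 ≤ s) (hD : PhiInvGrowthLE φ s D) (hf : ∀ᵐ y, φ y ‖f y‖₊ ≠ ∞)
    (hG : ∀ᵐ y, φ y ‖f y‖₊ + H y = G y) (hz : z ∈ S) (hzQ : z ∈ Q.set) (hHz : H z ≤ a)
    (ha : a * (2 ^ n * volume Q.set) ≤ 1 / 2) (ha_top : a ≠ ∞) :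
    ∀ᵐ y ∂volume.restrict Q.set, ‖f y‖ₑ ≤ D * D * K * phiInv φ z a * (G y / a + 1) ^ s := by
  filter_upwards [ae_restrict_of_ae hf, ae_restrict_of_ae hG, ae_restrict_of_ae hL.mem_ae,
    ae_restrict_mem Q.measurableSet_set] with y hfy hGy hyS hyQ
  have hHy : H y ≠ ∞ := ne_top_of_le_ne_top (by simp) (hL.le_half y)
  rw [← hGy]
  exact hφ.le_mul_phiInv hs hD ((hL.pos z).trans_le hHz).ne' ha_top hHy (hL.phiInv_add_le hyS hz
    hyQ hzQ le_add_self (hHz.trans le_self_add) (hL.le_half y) ha) hfy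

theorem Cube.laverage_enorm_sub_mul_le (Q : Cube n) (hP : 1 < P) (hb : AEMeasurable b)
    {J : ℝ≥0∞}
    (hJ : ⨍⁻ y in Q.set, (1 + ‖b y - cubeAvg Q b‖ₑ) ^ P.conjExponent ∂volume ≤ J)
    (hG : Measurable G) (h₀ : ⨍⁻ y in Q.set, G y ∂volume ≠ 0)
    (ht : ⨍⁻ y in Q.set, G y ∂volume ≠ ∞) {Λ : ℝ≥0∞}
    (hf : ∀ᵐ y ∂volume.restrict Q.set,
      ‖f y‖ₑ ≤ Λ * (G y ^ P / (⨍⁻ y in Q.set, G y ∂volume) ^ P + 1) ^ (1 / (P * P))) (u : ℝ) :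
    ⨍⁻ y in Q.set, ‖u - b y‖ₑ * ‖f y‖ₑ ∂volume ≤
      (1 + ‖u - cubeAvg Q b‖ₑ) * Λ * (J ^ (1 / P.conjExponent) * 2 ^ (1 / P)) := by
  have hPP := Real.HolderConjugate.conjExponent hP
  have hconj : 0 ≤ 1 / P.conjExponent := hPP.symm.one_div_nonneg
  have hg : Measurable fun y =>
      (G y ^ P / (⨍⁻ y in Q.set, G y ∂volume) ^ P + 1) ^ (1 / (P * P)) :=
    (((hG.pow_const P).div_const _).add_const 1).pow_const _
  refine (lintegral_enorm_sub_mul_le hPP.symm (hb.restrict.smul_measure _) hg.aemeasurable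
    (Measure.ae_smul_measure hf _) u (cubeAvg Q b)).trans ?_
  gcongr
  · exact hJ
  · simp_rw [← ENNReal.rpow_mul, show 1 / (P * P) * P = 1 / P by field_simp]
    exact lintegral_rpow_div_rpow_add_one_rpow_le_two hP.le hG h₀ ht

theorem rpow_le_rpow_neg_of_mul_le_one (hγ : 0 ≤ γ) {V : ℝ≥0∞} (h : V * a ≤ 1) :
    V ^ γ ≤ a ^ (-γ) := by
  rw [ENNReal.rpow_neg, ← ENNReal.inv_rpow]
  gcongr
  exact ENNReal.le_inv_iff_mul_le.2 h

/-- A point `z` at which `G` does not exceed its average serves as the intermediary between the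
values of `f` on `Q` and the inverse at `x`. -/
theorem LevelComparison.volume_rpow_mul_lintegral_le (hL : LevelComparison φ ε H K S)
    (hφ : IsWeakPhi univ φ) (hP : 1 < P) {D₁ D₂ c : ℝ≥0} (hD₁ : PhiInvGrowthLE φ (1 / (P * P)) D₁)
    (hγ : 0 ≤ γ) (hγr : γ < r) (hD₂ : PhiInvGrowthGE φ r D₂)
    (hψ : ∀ t, t ≠ 0 → t ≠ ∞ → phiInv φ x t ≤ c * (t ^ γ * phiInv ψ x t))
    (hb : AEMeasurable b) {J : ℝ≥0∞}
    (hJ : ⨍⁻ y in Q.set, (1 + ‖b y - cubeAvg Q b‖ₑ) ^ P.conjExponent ∂volume ≤ J)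
    (hf : ∀ᵐ y, φ y ‖f y‖₊ ≠ ∞) (hGm : Measurable G) (hG : ∀ᵐ y, φ y ‖f y‖₊ + H y = G y ^ P)
    (hx : x ∈ S) (hxQ : x ∈ Q.set)
    (ha : (⨍⁻ y in Q.set, G y ∂volume) ^ P * (2 ^ n * volume Q.set) ≤ 1 / 2) :
    volume Q.set ^ (γ - 1) * ∫⁻ y in Q.set, ‖b x - b y‖ₑ * ‖f y‖ₑ ≤
      D₁ * D₁ * K * (J ^ (1 / P.conjExponent) * 2 ^ (1 / P)) * (D₂ * D₂ * K * c) *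
        phiInv ψ x ((1 + ‖b x - cubeAvg Q b‖ₑ) ^ (1 / (r - γ)) *
          (⨍⁻ y in Q.set, G y ∂volume) ^ P + H x) := by
  have hP₀ : 0 < P := by linarith
  set A := ⨍⁻ y in Q.set, G y ∂volume
  obtain ⟨z, hzQ, ⟨hz, hGz⟩, hzA⟩ := Q.exists_mem_le_laverage hGm (inter_mem hL.mem_ae hG)
  have hHz : H z ≤ A ^ P := (le_add_self.trans_eq hGz).trans (by gcongr)
  have hA₀ : A ^ P ≠ 0 := ((hL.pos z).trans_le hHz).ne'
  have hA_top : A ^ P ≠ ∞ := fun htop => by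
    simp [htop, ENNReal.top_mul, Q.volume_set_ne_zero] at ha
  have hA_zero : A ≠ 0 := fun h => hA₀ (by rw [h, ENNReal.zero_rpow_of_pos hP₀])
  have hA_ne_top : A ≠ ∞ := fun h => hA_top (by rw [h, ENNReal.top_rpow_of_pos hP₀])
  have hB : 1 + ‖b x - cubeAvg Q b‖ₑ ≠ ∞ := by finiteness
  have hHx : H x ≠ ∞ := ne_top_of_le_ne_top (by simp) (hL.le_half x)
  have hVA : volume Q.set * A ^ P ≤ 1 := by
    calc volume Q.set * A ^ P ≤ A ^ P * (2 ^ n * volume Q.set) := by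
          rw [mul_comm]
          gcongr
          exact le_mul_of_one_le_left zero_le (one_le_pow₀ one_le_two)
      _ ≤ 1 := ha.trans (by simp)
  rw [Q.volume_rpow_sub_one_mul_lintegral]
  calc _ ≤ (A ^ P) ^ (-γ) * ((1 + ‖b x - cubeAvg Q b‖ₑ) * (D₁ * D₁ * K * phiInv φ z (A ^ P)) *
          (J ^ (1 / P.conjExponent) * 2 ^ (1 / P))) := by
        gcongr
        · exact rpow_le_rpow_neg_of_mul_le_one hγ hVA
        · exact Q.laverage_enorm_sub_mul_le hP hb hJ hGm hA_zero hA_ne_top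
            (hL.ae_enorm_le hφ (by positivity) hD₁ hf hG hz hzQ hHz ha hA_top) (b x)
    _ = D₁ * D₁ * K * (J ^ (1 / P.conjExponent) * 2 ^ (1 / P)) *
          ((1 + ‖b x - cubeAvg Q b‖ₑ) * (A ^ P) ^ (-γ) * phiInv φ z (A ^ P)) := by ring
    _ ≤ _ := by
      rw [mul_assoc _ _ (phiInv ψ x _)]
      exact mul_le_mul_right (mul_rpow_neg_mul_phiInv_le hγ hγr hD₂ hψ le_self_add hB hA₀ hA_top
        hHx (hL.phiInv_add_le hz hx hzQ hxQ (hHz.trans le_self_add) le_add_self (hL.le_half x)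
        ha)) _

end SingleCube

/-! ### The commutator is bounded when `b` has bounded mean oscillation -/

section Sufficiency

variable {n : ℕ} {φ ψ : RSp n → ℝ≥0 → ℝ≥0∞} {ε K : ℝ≥0} {H : RSp n → ℝ≥0∞} {S : Set (RSp n)}

theorem exists_measurable_rpow_eq {Ω : Type*} [MeasurableSpace Ω] {μ : Measure Ω}
    {F : Ω → ℝ≥0∞} (hF : AEMeasurable F μ) {P : ℝ} (hP : P ≠ 0) :
    ∃ G : Ω → ℝ≥0∞, Measurable G ∧ ∀ᵐ y ∂μ, F y = G y ^ P := by
  refine ⟨fun y => hF.mk F y ^ P⁻¹, hF.measurable_mk.pow_const _, ?_⟩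
  filter_upwards [hF.ae_eq_mk] with y hy
  rw [ENNReal.rpow_inv_rpow hP, hy]

theorem LevelComparison.exists_fracMaximalComm_le (hL : LevelComparison φ ε H K S)
    (hφ : IsWeakPhi univ φ) {α P r : ℝ} (hP : 1 < P) {D₁ D₂ : ℝ≥0}
    (hD₁ : PhiInvGrowthLE φ (1 / (P * P)) D₁) (hγ : 0 ≤ α / n) (hγr : α / n < r)
    (hD₂ : PhiInvGrowthGE φ r D₂) (hinv : FracInvRel α φ ψ) :
    ∃ C : ℝ≥0, C ≠ 0 ∧ ∀ b, LocallyIntegrable b volume → bmoNorm b ≤ 1 →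
      ∀ f, (∀ᵐ y, φ y ‖f y‖₊ ≠ ∞) →
      ∀ G : RSp n → ℝ≥0∞, Measurable G → (∀ᵐ y, φ y ‖f y‖₊ + H y = G y ^ P) →
      (2 ^ n * ∫⁻ y, G y ^ P) ≤ 1 / 2 → ∀ x ∈ S, ∀ T,
      (∀ Q : Cube n, x ∈ Q.set → (1 + ‖b x - cubeAvg Q b‖ₑ) ^ (1 / (r - α / n)) *
        (⨍⁻ y in Q.set, G y ∂volume) ^ P ≤ T) →
      fracMaximalComm α b f x ≤ C * phiInv ψ x (T + H x) := by
  obtain ⟨c, hc⟩ := hinv.exists_phiInv_le_mul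
  have hconj := Real.HolderConjugate.conjExponent hP
  obtain ⟨J, hJ⟩ := exists_laverage_rpow_osc_le n hconj.symm.nonneg
  refine ⟨D₁ * D₁ * K * (J ^ (1 / P.conjExponent) * 2 ^ (1 / P)) * (D₂ * D₂ * K * c) + 1,
    by positivity, fun b hb hb₁ f hf G hGm hG hGint x hx T hT => iSup₂_le fun Q hxQ => ?_⟩
  have ha : (⨍⁻ y in Q.set, G y ∂volume) ^ P * (2 ^ n * volume Q.set) ≤ 1 / 2 := by
    rw [mul_left_comm, mul_comm (_ ^ P)]
    exact (mul_le_mul_right (Q.volume_mul_laverage_rpow_le hP.le hGm) _).trans hGint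
  refine (hL.volume_rpow_mul_lintegral_le hφ hP hD₁ hγ hγr hD₂ (hc x)
    hb.aestronglyMeasurable.aemeasurable (hJ b hb hb₁ Q) hf hGm hG hx hxQ ha).trans ?_
  gcongr
  · push_cast
    rw [ENNReal.coe_rpow_of_nonneg _ hconj.symm.one_div_nonneg,
      ENNReal.coe_rpow_of_nonneg _ (by positivity), coe_ofNat]
    exact le_self_add
  · exact phiInv_mono ψ x (by gcongr; exact hT Q hxQ)

theorem exists_lintegral_phiE_fracMaximalComm_le (hn : n ≠ 0) {p r α : ℝ} (hp : 1 < p)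
    (hγ : 0 ≤ α / n) (hγr : α / n < r) (hφ : IsWeakPhi univ φ) (hψ : IsWeakPhi univ ψ)
    (hinv : FracInvRel α φ ψ) (h₁ : A1 φ) (h₂ : A2 φ) (hInc : AInc p univ φ)
    (hDec : ADec (1 / r) univ φ) :
    ∃ ε C C' : ℝ≥0, 0 < ε ∧ 0 < C ∧ ∀ b : RSp n → ℝ, LocallyIntegrable b volume → bmoNorm b ≤ 1 →
      ∀ f : RSp n → ℝ, AEMeasurable f → ∫⁻ x, φ x ‖f x‖₊ ≤ ε →
      ∫⁻ x, phiE ψ x (fracMaximalComm α b f x / C) ≤ C' := by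
  have hP : 1 < √p := Real.lt_sqrt_of_sq_lt (by linarith)
  obtain ⟨D₁, hD₁⟩ := hInc.exists_phiInvGrowthLE (by linarith) hφ
  obtain ⟨D₂, hD₂⟩ := hDec.exists_phiInvGrowthGE (hγ.trans_lt hγr) hφ
  obtain ⟨ε, hε, -, hnε⟩ := exists_pos_le_one_mul_le (2 ^ n * 2) (inv_pos.2 (zero_lt_two' ℝ≥0))
  obtain ⟨H, K, S, hL⟩ := exists_levelComparison hφ h₁ h₂ (by positivity) hD₁ hε
  rw [← Real.mul_self_sqrt (zero_le_one.trans hp.le)] at hD₁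
  obtain ⟨C, hC, hMax⟩ := hL.exists_fracMaximalComm_le hφ hP hD₁ hγ hγr hD₂ hinv
  obtain ⟨C', hMaj⟩ := exists_weighted_maximal_majorant hn hP
    (one_div_nonneg.2 (sub_nonneg.2 hγr.le))
  refine ⟨ε, 2 * C, C' * (2 * ε) + ε, by positivity, by positivity, fun b hb hb₁ f hf hfε => ?_⟩
  have hφf : AEMeasurable fun y => φ y ‖f y‖₊ := by
    simpa using hφ.aemeasurable_comp_nnnorm (Measure.restrict_univ.symm ▸ hf)
  obtain ⟨G, hGm, hG⟩ := exists_measurable_rpow_eq (hφf.add hL.measurable.aemeasurable)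
    (zero_lt_one.trans hP).ne'
  have hGε : ∫⁻ y, G y ^ √p ≤ 2 * ε := by
    rw [← lintegral_congr_ae hG, two_mul]
    refine (lintegral_add_right _ hL.measurable).trans_le ?_
    exact add_le_add hfε hL.lintegral_le
  have hGhalf : 2 ^ n * ∫⁻ y, G y ^ √p ≤ 1 / 2 := by
    refine (mul_le_mul_right hGε _).trans ?_
    rw [← mul_assoc, one_div, ← ENNReal.coe_ofNat, ← ENNReal.coe_inv two_ne_zero]
    exact_mod_cast hnε
  obtain ⟨T, hTm, hT, hTint⟩ := hMaj b hb hb₁ G hGm (ne_top_of_le_ne_top (by finiteness) hGε)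
  calc ∫⁻ x, phiE ψ x (fracMaximalComm α b f x / (2 * C : ℝ≥0)) ≤ ∫⁻ x, (T x + H x) := by
        refine lintegral_mono_ae ?_
        filter_upwards [hT, hL.mem_ae] with x hTx hx
        refine hψ.phiE_div_le_of_le_mul_phiInv (mem_univ x) hC
          (by simp [(hL.pos x).ne']) ?_
        exact hMax b hb hb₁ f (ae_lt_top' hφf (ne_top_of_le_ne_top coe_ne_top hfε) |>.mono
          fun _ h => h.ne) G hGm hG hGhalf x hx _ hTx
    _ = (∫⁻ x, T x) + ∫⁻ x, H x := lintegral_add_left hTm _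
    _ ≤ C' * (2 * ε) + ε := by gcongr; exacts [hTint.trans (by gcongr), hL.lintegral_le]
    _ = _ := by push_cast; rfl

theorem IsWeakPhi.exists_lintegral_phiE_mul_le (hφ : IsWeakPhi univ φ) (C : ℝ≥0) (hε : 0 < ε) :
    ∃ κ : ℝ≥0, 0 < κ ∧ ∀ g : RSp n → ℝ≥0∞, ∫⁻ x, phiE φ x (g x) ≤ C →
      ∫⁻ x, phiE φ x (κ * g x) ≤ ε := by
  obtain ⟨L, hL⟩ := hφ.exists_phiE_mul_le
  obtain ⟨κ, hκ₀, hκ₁, hκ⟩ := exists_pos_le_one_mul_le (C * L) hε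
  refine ⟨κ, hκ₀, fun g hg => ?_⟩
  calc ∫⁻ x, phiE φ x (κ * g x) ≤ ∫⁻ x, L * κ * phiE φ x (g x) :=
        lintegral_mono fun x => hL x (mem_univ x) _ κ hκ₀.ne' hκ₁
    _ = L * κ * ∫⁻ x, phiE φ x (g x) := lintegral_const_mul' _ _ (by finiteness)
    _ ≤ L * κ * C := by gcongr
    _ = (C * L * κ : ℝ≥0) := by push_cast; ring
    _ ≤ ε := coe_le_coe.2 hκ

theorem orliczNormE_le_of_lintegral_phiE_div_le_one {g : RSp n → ℝ≥0∞} {l : ℝ≥0} (hl : 0 < l)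
    (h : ∫⁻ x, phiE φ x (g x / l) ≤ 1) : orliczNormE φ univ g ≤ l :=
  sInf_le ⟨l, ⟨hl, by rwa [Measure.restrict_univ]⟩, rfl⟩

theorem exists_lintegral_phiE_div_le_one_of_orliczNormE_lt {g : RSp n → ℝ≥0∞} {t : ℝ≥0∞}
    (h : orliczNormE φ univ g < t) :
    ∃ l : ℝ≥0, 0 < l ∧ l < t ∧ ∫⁻ x, phiE φ x (g x / l) ≤ 1 := by
  obtain ⟨_, ⟨l, ⟨hl₀, hl⟩, rfl⟩, hlt⟩ := sInf_lt_iff.1 h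
  exact ⟨l, hl₀, hlt, by rwa [Measure.restrict_univ] at hl⟩

theorem IsWeakPhi.orliczNorm_eq_orliczNormE (hφ : IsWeakPhi univ φ) (f : RSp n → ℝ) :
    orliczNorm φ univ f = orliczNormE φ univ fun x => ‖f x‖ₑ := by
  refine congrArg (fun A => sInf ((fun l : ℝ≥0 => (l : ℝ≥0∞)) '' A)) (Set.ext fun l =>
    and_congr_right fun hl => ?_)
  simp_rw [enorm_eq_nnnorm, ← ENNReal.coe_div hl.ne', hφ.phiE_coe (mem_univ _)]

theorem IsWeakPhi.orliczNorm_ne_top (hφ : IsWeakPhi univ φ) {f : RSp n → ℝ}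
    (hf : MemOrlicz φ univ f) : orliczNorm φ univ f ≠ ∞ := by
  obtain ⟨-, l, hl₀, hl⟩ := hf
  obtain ⟨κ, hκ₀, hκ⟩ := hφ.exists_lintegral_phiE_mul_le (ENNReal.toNNReal _) one_pos
  rw [hφ.orliczNorm_eq_orliczNormE]
  refine ne_top_of_le_ne_top coe_ne_top (orliczNormE_le_of_lintegral_phiE_div_le_one
    (l := (κ * l)⁻¹) (by positivity) ((lintegral_mono fun x => le_of_eq ?_).trans
    ((hκ (fun x => l * ‖f x‖ₑ) ?_).trans_eq ENNReal.coe_one)))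
  · rw [ENNReal.coe_inv (by positivity), div_eq_mul_inv, inv_inv, coe_mul, mul_comm, mul_assoc]
  · rw [Measure.restrict_univ] at hl
    simp_rw [enorm_eq_nnnorm, ← coe_mul, hφ.phiE_coe (mem_univ _)]
    exact (ENNReal.coe_toNNReal hl.ne).ge

theorem fracMaximalComm_const_mul (α c d : ℝ) (b f : RSp n → ℝ) (x : RSp n) :
    fracMaximalComm α (fun x => c * b x) (fun x => d * f x) x =
      ‖c‖ₑ * ‖d‖ₑ * fracMaximalComm α b f x := by
  simp_rw [fracMaximalComm, ← enorm_eq_nnnorm, ← mul_sub, enorm_mul, mul_mul_mul_comm _ ‖b _ - _‖ₑ,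
    lintegral_const_mul' (‖c‖ₑ * ‖d‖ₑ) _ (by finiteness), ENNReal.mul_iSup, mul_left_comm]

theorem orliczNormE_fracMaximalComm_le_of_modular (hφ : IsWeakPhi univ φ) (hψ : IsWeakPhi univ ψ)
    {α : ℝ} {C C' : ℝ≥0} (hε : 0 < ε) (hC : 0 < C)
    (h : ∀ b : RSp n → ℝ, LocallyIntegrable b volume → bmoNorm b ≤ 1 →
      ∀ f : RSp n → ℝ, AEMeasurable f → ∫⁻ x, φ x ‖f x‖₊ ≤ ε →
      ∫⁻ x, phiE ψ x (fracMaximalComm α b f x / C) ≤ C') :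
    ∃ K : ℝ≥0, 0 < K ∧ ∀ b : RSp n → ℝ, LocallyIntegrable b volume →
      ∀ β : ℝ≥0, 0 < β → bmoNorm b ≤ β → ∀ f : RSp n → ℝ, AEMeasurable f →
      ∀ l : ℝ≥0, 0 < l → ∫⁻ x, phiE φ x (‖f x‖ₑ / l) ≤ 1 →
      orliczNormE ψ univ (fracMaximalComm α b f) ≤ K * (β * l) := by
  obtain ⟨κ, hκ₀, hκ⟩ := hφ.exists_lintegral_phiE_mul_le 1 hε
  obtain ⟨κ', hκ'₀, hκ'⟩ := hψ.exists_lintegral_phiE_mul_le C' one_pos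
  refine ⟨C / (κ * κ'), by positivity, fun b hb β hβ hbβ f hf l hl hfl => ?_⟩
  have hbβ' : bmoNorm (fun x => (β⁻¹ : ℝ≥0) * b x) ≤ 1 := by
    rw [bmoNorm_const_mul, enorm_eq_nnnorm, NNReal.nnnorm_eq, ENNReal.coe_inv hβ.ne']
    exact (mul_le_mul_right hbβ _).trans (ENNReal.inv_mul_le_one _)
  have hfl' : ∫⁻ x, φ x ‖(κ / l : ℝ≥0) * f x‖₊ ≤ ε := by
    refine (lintegral_mono fun x => le_of_eq ?_).trans (hκ (fun x => ‖f x‖ₑ / l) (by simpa))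
    rw [nnnorm_mul, NNReal.nnnorm_eq, ← hφ.phiE_coe (mem_univ x), coe_mul,
      ENNReal.coe_div hl.ne', enorm_eq_nnnorm, ENNReal.mul_comm_div]
  have hmod := hκ' _ (h (fun x => (β⁻¹ : ℝ≥0) * b x) (hb.smul ((β⁻¹ : ℝ≥0) : ℝ)) hbβ' _
    (hf.const_mul _) hfl')
  have hK : (0 : ℝ≥0) < C / (κ * κ') * (β * l) := by positivity
  rw [← coe_mul, ← coe_mul]
  refine orliczNormE_le_of_lintegral_phiE_div_le_one hK
    ((lintegral_mono fun x => le_of_eq ?_).trans (hmod.trans_eq ENNReal.coe_one))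
  have hconst : (C / (κ * κ') * (β * l))⁻¹ = κ' * (β⁻¹ * (κ / l) * C⁻¹) := by field_simp
  rw [fracMaximalComm_const_mul, enorm_eq_nnnorm, enorm_eq_nnnorm, NNReal.nnnorm_eq,
    NNReal.nnnorm_eq, ENNReal.div_eq_inv_mul, ENNReal.div_eq_inv_mul, ← ENNReal.coe_inv hK.ne',
    ← ENNReal.coe_inv hC.ne', hconst]
  congr 1
  push_cast
  ring

theorem exists_orliczNormE_fracMaximalComm_le (hn : n ≠ 0) {p r α : ℝ} (hp : 1 < p)
    (hγ : 0 ≤ α / n) (hγr : α / n < r) (hφ : IsWeakPhi univ φ) (hψ : IsWeakPhi univ ψ)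
    (hinv : FracInvRel α φ ψ) (h₁ : A1 φ) (h₂ : A2 φ) (hInc : AInc p univ φ)
    (hDec : ADec (1 / r) univ φ) :
    ∃ C : ℝ≥0, ∀ b : RSp n → ℝ, IsBMO b → ∀ f : RSp n → ℝ, MemOrlicz φ univ f →
      orliczNormE ψ univ (fracMaximalComm α b f) ≤ C * bmoNorm b * orliczNorm φ univ f := by
  obtain ⟨ε, C, C', hε, hC, h⟩ :=
    exists_lintegral_phiE_fracMaximalComm_le hn hp hγ hγr hφ hψ hinv h₁ h₂ hInc hDec
  obtain ⟨K, hK, hbound⟩ := orliczNormE_fracMaximalComm_le_of_modular hφ hψ hε hC h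
  refine ⟨K, fun b hb f hf => ?_⟩
  have hfm : AEMeasurable f := by simpa using hf.1
  rw [mul_assoc, mul_comm, ← ENNReal.div_le_iff (by simpa using hK.ne') coe_ne_top]
  refine ENNReal.le_mul_of_forall_lt (.inr (hφ.orliczNorm_ne_top hf)) (.inl hb.2.ne)
    fun β' hβ' l' hl' => ?_
  obtain ⟨β, hbβ, hβ⟩ := ENNReal.lt_iff_exists_nnreal_btwn.1 hβ'
  rw [hφ.orliczNorm_eq_orliczNormE] at hl'
  obtain ⟨l, hl₀, hl, hfl⟩ := exists_lintegral_phiE_div_le_one_of_orliczNormE_lt hl'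
  refine ENNReal.div_le_of_le_mul' ?_
  calc orliczNormE ψ univ (fracMaximalComm α b f) ≤ K * (β * l) :=
        hbound b hb.1 β (coe_pos.1 (zero_le.trans_lt hbβ)) hbβ.le f hfm l hl₀ hfl
    _ ≤ K * (β' * l') := by gcongr

end Sufficiency

/-! ### Boundedness of the commutator forces bounded mean oscillation -/

section Necessity

variable {n : ℕ} {φ ψ : RSp n → ℝ≥0 → ℝ≥0∞} {ε K : ℝ≥0} {H : RSp n → ℝ≥0∞} {S : Set (RSp n)}
  {b : RSp n → ℝ} {Q : Cube n} {t : ℝ≥0∞} {α : ℝ} {z : RSp n}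

theorem IsWeakPhi.le_phiE_of_phiInv_lt (hφ : IsWeakPhi univ φ) {x : RSp n} {g : ℝ≥0∞}
    (h : phiInv φ x t < g) : t ≤ phiE φ x g := by
  obtain ⟨s, hs, hsg⟩ := ENNReal.lt_iff_exists_nnreal_btwn.1 h
  exact (hφ.le_of_phiInv_lt (mem_univ x) hs).trans (le_phiE hsg.le)

theorem IsWeakPhi.memOrlicz_and_orliczNorm_le (hφ : IsWeakPhi univ φ) {f : RSp n → ℝ}
    (hf : AEMeasurable f) {l : ℝ≥0} (hl : 0 < l) (h : ∫⁻ x, phiE φ x (‖f x‖ₑ / l) ≤ 1) :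
    MemOrlicz φ univ f ∧ orliczNorm φ univ f ≤ l := by
  refine ⟨⟨by simpa using hf, l⁻¹, by positivity, ?_⟩, ?_⟩
  · rw [Measure.restrict_univ]
    refine (h.trans_eq' (lintegral_congr fun x => ?_)).trans_lt one_lt_top
    rw [← hφ.phiE_coe (mem_univ x), coe_mul, ENNReal.coe_inv hl.ne', ENNReal.div_eq_inv_mul,
      enorm_eq_nnnorm]
  · rw [hφ.orliczNorm_eq_orliczNormE]
    exact orliczNormE_le_of_lintegral_phiE_div_le_one hl h

theorem LevelComparison.memOrlicz_indicator_and_orliczNorm_le (hL : LevelComparison φ ε H K S)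
    (hφ : IsWeakPhi univ φ) (hK : 0 < K) (hε : ε ≤ 1 / 2) (ht₀ : t ≠ 0)
    (ht : t * (2 ^ n * volume Q.set) ≤ 1 / 2) (hz : z ∈ S) (hzQ : z ∈ Q.set) (hHz : H z ≤ t)
    {w : ℝ≥0} (hw : w ≤ phiInv φ z t) :
    MemOrlicz φ univ (Q.set.indicator fun _ => (w : ℝ)) ∧
      orliczNorm φ univ (Q.set.indicator fun _ => (w : ℝ)) ≤ (2 * K : ℝ≥0) := by
  have hle : ∀ᵐ x, phiE φ x (‖Q.set.indicator (fun _ => (w : ℝ)) x‖ₑ / (2 * K : ℝ≥0)) ≤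
      Q.set.indicator (fun _ => t) x + H x := by
    filter_upwards [hL.mem_ae] with x hx
    by_cases hxQ : x ∈ Q.set
    · rw [indicator_of_mem hxQ, indicator_of_mem hxQ, enorm_eq_nnnorm, NNReal.nnnorm_eq]
      refine hφ.phiE_div_le_of_le_mul_phiInv (mem_univ x) hK.ne' (by simp [ht₀]) ?_
      calc (w : ℝ≥0∞) ≤ phiInv φ z (t + H x) := hw.trans (phiInv_mono φ z le_self_add)
        _ ≤ K * phiInv φ x (t + H x) :=
          hL.phiInv_add_le hz hx hzQ hxQ (hHz.trans le_self_add) le_add_self (hL.le_half x) ht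
    · have h0 := hφ.phiE_coe (mem_univ x) 0
      rw [indicator_of_notMem hxQ, enorm_zero, ENNReal.zero_div, ← ENNReal.coe_zero, h0,
        hφ.zero x (mem_univ x)]
      exact zero_le
  have htQ : t * volume Q.set ≤ 1 / 2 :=
    (mul_le_mul_right (le_mul_of_one_le_left zero_le (one_le_pow₀ one_le_two)) t).trans ht
  refine hφ.memOrlicz_and_orliczNorm_le
    (measurable_const.indicator Q.measurableSet_set).aemeasurable (by positivity) ?_
  calc ∫⁻ x, phiE φ x (‖Q.set.indicator (fun _ => (w : ℝ)) x‖ₑ / (2 * K : ℝ≥0))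
    _ ≤ ∫⁻ x, (Q.set.indicator (fun _ => t) x + H x) := lintegral_mono_ae hle
    _ = t * volume Q.set + ∫⁻ x, H x := by
      rw [lintegral_add_right _ hL.measurable, lintegral_indicator_const Q.measurableSet_set]
    _ ≤ 1 / 2 + 1 / 2 := by
      refine add_le_add htQ (hL.lintegral_le.trans ?_)
      rw [one_div, ← ENNReal.coe_ofNat, ← ENNReal.coe_inv two_ne_zero]
      exact_mod_cast one_div (2 : ℝ≥0) ▸ hε
    _ = 1 := ENNReal.add_halves 1

theorem volume_rpow_mul_laverage_le_fracMaximalComm_indicator (α : ℝ) (b : RSp n → ℝ) (w : ℝ≥0)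
    {x : RSp n} (hx : x ∈ Q.set) :
    volume Q.set ^ (α / n) * w * ⨍⁻ y in Q.set, ‖b x - b y‖ₑ ∂volume ≤
      fracMaximalComm α b (Q.set.indicator fun _ => (w : ℝ)) x := by
  refine le_trans (le_of_eq ?_) (le_iSup₂ Q hx)
  rw [mul_assoc, mul_left_comm, ← Q.volume_rpow_sub_one_mul_lintegral, mul_left_comm,
    ← lintegral_const_mul' _ _ coe_ne_top]
  congr 1
  refine setLIntegral_congr_fun Q.measurableSet_set fun y hy => ?_
  rw [indicator_of_mem hy, NNReal.nnnorm_eq, mul_comm, enorm_eq_nnnorm]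

theorem LevelComparison.exists_phiInv_le_volume_rpow_mul (hL : LevelComparison φ ε H K S)
    (hε : 0 < ε) (hεn : 2 ^ n * (2 * ε) ≤ 1) (hinv : FracInvRel α φ ψ) :
    ∃ D : ℝ≥0, ∀ (Q : Cube n) (t : ℝ≥0∞), t * volume Q.set = (2 * ε : ℝ≥0) →
      ∀ x ∈ S, ∀ z ∈ S, x ∈ Q.set → z ∈ Q.set → H x ≤ t → H z ≤ t →
      phiInv ψ x t ≤ D * (volume Q.set ^ (α / n) * phiInv φ z t) := by
  obtain ⟨c, _, hc, hinv⟩ := hinv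
  set d : ℝ≥0 := c * (2 * ε) ^ (α / n) with hd_def
  have hd : 0 < d := by positivity
  refine ⟨K / d, fun Q t ht x hx z hz hxQ hzQ hHx hHz => ?_⟩
  have ht₀ : t ≠ 0 := left_ne_zero_of_mul (ht.trans_ne (by simpa using hε.ne'))
  have htop : t ≠ ∞ :=
    (ENNReal.lt_top_of_mul_ne_top_left (ht.trans_ne coe_ne_top) Q.volume_set_ne_zero).ne
  have htn : t * (2 ^ n * volume Q.set) ≤ 1 := by
    rw [mul_left_comm, ht]
    exact_mod_cast hεn
  have hdt : (d : ℝ≥0∞) = c * (t ^ (α / n) * volume Q.set ^ (α / n)) := by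
    rw [← ENNReal.mul_rpow_of_ne_top htop Q.volume_set_ne_top, ht, hd_def, coe_mul,
      ENNReal.coe_rpow_of_ne_zero (by positivity)]
  have hψφ : c * (t ^ (α / n) * phiInv ψ x t) ≤ phiInv φ x t := by
    lift t to ℝ≥0 using htop
    exact (hinv x t (by simpa [pos_iff_ne_zero] using ht₀)).1
  rw [ENNReal.coe_div hd.ne', ENNReal.mul_comm_div, ← mul_div_assoc,
    ENNReal.le_div_iff_mul_le (.inl (by simpa using hd.ne')) (.inl coe_ne_top)]
  calc phiInv ψ x t * d = volume Q.set ^ (α / n) * (c * (t ^ (α / n) * phiInv ψ x t)) := by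
        rw [hdt]; ring
    _ ≤ volume Q.set ^ (α / n) * (K * phiInv φ z t) := by
        gcongr _ * ?_
        exact hψφ.trans (hL.phiInv_le x hx z hz Q hxQ hzQ t hHx hHz (.inr htn))
    _ = K * (volume Q.set ^ (α / n) * phiInv φ z t) := mul_left_comm _ _ _

/-- If the oscillation about every value `b x` were large, `ψ(x, δ M)` would exceed the level `t`
wherever the error `H` does not, and then the two integrals would add up to at least `t |Q|`. -/
theorem exists_mem_laverage_le_of_lintegral_add_lt (hψ : IsWeakPhi univ ψ) (hHm : Measurable H)
    (hS : S ∈ ae volume) {M : RSp n → ℝ≥0∞} {D δ : ℝ≥0} (hδ : 0 < δ) {A : ℝ≥0∞}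
    (hinv : ∀ x ∈ S, x ∈ Q.set → H x ≤ t → phiInv ψ x t ≤ D * A) (hA₀ : A ≠ 0) (hA : A ≠ ∞)
    (hM : ∀ x ∈ Q.set, A * ⨍⁻ y in Q.set, ‖b x - b y‖ₑ ∂volume ≤ M x)
    (hint : (∫⁻ x, phiE ψ x (δ * M x)) + ∫⁻ x, H x < t * volume Q.set) :
    ∃ x ∈ Q.set, ⨍⁻ y in Q.set, ‖b x - b y‖ₑ ∂volume ≤ (D / δ : ℝ≥0) := by
  by_contra! hosc
  refine hint.not_ge ?_
  have hlevel : ∀ x ∈ S, x ∈ Q.set → t ≤ phiE ψ x (δ * M x) + H x := by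
    intro x hx hxQ
    obtain hHx | hHx := lt_or_ge t (H x)
    · exact hHx.le.trans le_add_self
    refine (hψ.le_phiE_of_phiInv_lt ?_).trans le_self_add
    calc phiInv ψ x t ≤ D * A := hinv x hx hxQ hHx
      _ = δ * (A * (D / δ : ℝ≥0)) := by
        rw [mul_left_comm, ← coe_mul, mul_div_cancel₀ D hδ.ne', mul_comm]
      _ < δ * (A * ⨍⁻ y in Q.set, ‖b x - b y‖ₑ ∂volume) := by
        exact ENNReal.mul_lt_mul_right (by simpa using hδ.ne') coe_ne_top
          (ENNReal.mul_lt_mul_right hA₀ hA (hosc x hxQ))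
      _ ≤ δ * M x := by gcongr; exact hM x hxQ
  calc t * volume Q.set = ∫⁻ _ in Q.set, t := (setLIntegral_const _ _).symm
    _ ≤ ∫⁻ x in Q.set, (phiE ψ x (δ * M x) + H x) := by
      refine lintegral_mono_ae ((ae_restrict_iff' Q.measurableSet_set).2 ?_)
      filter_upwards [hS] with x hx using hlevel x hx
    _ ≤ ∫⁻ x, (phiE ψ x (δ * M x) + H x) := setLIntegral_le_lintegral _ _
    _ = (∫⁻ x, phiE ψ x (δ * M x)) + ∫⁻ x, H x := lintegral_add_right _ hHm

theorem IsWeakPhi.exists_lintegral_phiE_mul_le_of_orliczNormE_le (hψ : IsWeakPhi univ ψ) (N : ℝ≥0)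
    (hε : 0 < ε) : ∃ δ : ℝ≥0, 0 < δ ∧ ∀ g : RSp n → ℝ≥0∞, orliczNormE ψ univ g ≤ N →
      ∫⁻ x, phiE ψ x (δ * g x) ≤ ε := by
  obtain ⟨κ, hκ₀, hκ⟩ := hψ.exists_lintegral_phiE_mul_le 1 hε
  refine ⟨κ / (N + 1), by positivity, fun g hg => ?_⟩
  have hN : orliczNormE ψ univ g < (N + 1 : ℝ≥0) := hg.trans_lt (by exact_mod_cast lt_add_one N)
  obtain ⟨l, -, hl, hint⟩ := exists_lintegral_phiE_div_le_one_of_orliczNormE_lt hN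
  refine (lintegral_mono fun x => phiE_mono ψ x ?_).trans (hκ _ hint)
  rw [ENNReal.coe_div (by positivity), ENNReal.mul_comm_div]
  gcongr

theorem LevelComparison.exists_mem_le_level (hL : LevelComparison φ ε H K S) (Q : Cube n) :
    ∃ t, t * volume Q.set = (2 * ε : ℝ≥0) ∧ ∃ z ∈ Q.set, z ∈ S ∧ H z ≤ t := by
  obtain ⟨z, hzQ, hzS, hz⟩ := Q.exists_mem_le_laverage hL.measurable hL.mem_ae
  have ht := ENNReal.div_mul_cancel (b := (2 * ε : ℝ≥0)) Q.volume_set_ne_zero Q.volume_set_ne_top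
  refine ⟨_, ht, z, hzQ, hzS, hz.trans ?_⟩
  rw [← Q.mul_volume_set_le_iff, ht, mul_comm, Q.volume_mul_laverage]
  calc ∫⁻ x in Q.set, H x ≤ ∫⁻ x, H x := setLIntegral_le_lintegral _ _
    _ ≤ ε := hL.lintegral_le
    _ ≤ (2 * ε : ℝ≥0) := by exact_mod_cast le_mul_of_one_le_left zero_le one_le_two

theorem LevelComparison.exists_mem_laverage_enorm_sub_le (hL : LevelComparison φ ε H K S)
    (hφ : IsWeakPhi univ φ) (hψ : IsWeakPhi univ ψ) (hε : 0 < ε)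
    (hεn : 2 ^ n * (2 * ε) ≤ 1 / 2) (hK : 0 < K) {D δ : ℝ≥0} (hδ : 0 < δ)
    (hD : ∀ (Q : Cube n) (t : ℝ≥0∞), t * volume Q.set = (2 * ε : ℝ≥0) →
      ∀ x ∈ S, ∀ z ∈ S, x ∈ Q.set → z ∈ Q.set → H x ≤ t → H z ≤ t →
      phiInv ψ x t ≤ D * (volume Q.set ^ (α / n) * phiInv φ z t))
    (hmod : ∀ f, MemOrlicz φ univ f → orliczNorm φ univ f ≤ (2 * K : ℝ≥0) →
      ∫⁻ x, phiE ψ x (δ * fracMaximalComm α b f x) ≤ (ε / 2 : ℝ≥0)) (Q : Cube n) :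
    ∃ x ∈ Q.set, ⨍⁻ y in Q.set, ‖b x - b y‖ₑ ∂volume ≤ (D / δ : ℝ≥0) := by
  obtain ⟨t, ht, z, hzQ, hz, hHz⟩ := hL.exists_mem_le_level Q
  have ht₀ : t ≠ 0 := left_ne_zero_of_mul (ht.trans_ne (by simpa using hε.ne'))
  have htop : t ≠ ∞ :=
    (ENNReal.lt_top_of_mul_ne_top_left (ht.trans_ne coe_ne_top) Q.volume_set_ne_zero).ne
  have htn : t * (2 ^ n * volume Q.set) ≤ 1 / 2 := by
    rw [mul_left_comm, ht, one_div, ← ENNReal.coe_ofNat, ← ENNReal.coe_inv two_ne_zero]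
    exact_mod_cast one_div (2 : ℝ≥0) ▸ hεn
  have htop' := hφ.phiInv_ne_top (mem_univ z) htop
  obtain ⟨w, hw⟩ : ∃ w : ℝ≥0, (w : ℝ≥0∞) = phiInv φ z t := ⟨_, ENNReal.coe_toNNReal htop'⟩
  have hε₁ : ε ≤ 1 / 2 := (le_mul_of_one_le_left zero_le (one_le_mul (one_le_pow₀ one_le_two)
    one_le_two)).trans ((mul_assoc _ _ _).trans_le hεn)
  obtain ⟨hf, hnorm⟩ := hL.memOrlicz_indicator_and_orliczNorm_le hφ hK hε₁ ht₀ htn hz hzQ hHz hw.le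
  refine exists_mem_laverage_le_of_lintegral_add_lt hψ hL.measurable hL.mem_ae hδ
    (fun x hx hxQ hHx => hD Q t ht x hx z hz hxQ hzQ hHx hHz) ?_ ?_
    (fun x hx => hw ▸ volume_rpow_mul_laverage_le_fracMaximalComm_indicator α b w hx) ?_
  · exact (ENNReal.mul_pos (ENNReal.rpow_pos (pos_iff_ne_zero.2 Q.volume_set_ne_zero)
      Q.volume_set_ne_top).ne' (hφ.phiInv_pos (mem_univ z) ht₀).ne').ne'
  · exact mul_ne_top (ENNReal.rpow_ne_top_of_ne_zero Q.volume_set_ne_zero Q.volume_set_ne_top)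
      htop'
  · rw [ht]
    refine (add_le_add (hmod _ hf hnorm) hL.lintegral_le).trans_lt ?_
    rw [← ENNReal.coe_add, ENNReal.coe_lt_coe, two_mul]
    gcongr
    exact half_lt_self hε

theorem isBMO_of_orliczNormE_fracMaximalComm_le (hφ : IsWeakPhi univ φ) (hψ : IsWeakPhi univ ψ)
    (hinv : FracInvRel α φ ψ) (h₁ : A1 φ) (h₂ : A2 φ) (hb : LocallyIntegrable b volume) {C : ℝ≥0}
    (h : ∀ f, MemOrlicz φ univ f →
      orliczNormE ψ univ (fracMaximalComm α b f) ≤ C * orliczNorm φ univ f) : IsBMO b := by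
  obtain ⟨ε, hε, -, hεn⟩ := exists_pos_le_one_mul_le (2 ^ n * 2) (one_half_pos (α := ℝ≥0))
  rw [mul_assoc] at hεn
  obtain ⟨D, hD⟩ := hφ.aInc_one.exists_phiInvGrowthLE one_pos hφ
  obtain ⟨H, K, S, hL⟩ := exists_levelComparison hφ h₁ h₂ (by norm_num) hD hε
  obtain ⟨D', hD'⟩ :=
    hL.exists_phiInv_le_volume_rpow_mul hε (hεn.trans (half_le_self zero_le_one)) hinv
  obtain ⟨δ, hδ, hmod⟩ := hψ.exists_lintegral_phiE_mul_le_of_orliczNormE_le (C * (2 * K))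
    (half_pos hε)
  refine ⟨hb, (bmoNorm_le_two_mul hb (Λ := (D' / δ : ℝ≥0)) fun Q => ?_).trans_lt (by finiteness)⟩
  obtain ⟨x, -, hx⟩ := hL.exists_mem_laverage_enorm_sub_le hφ hψ hε hεn
    (one_pos.trans_le hL.one_le) hδ hD'
    (fun f hf hf₁ => hmod _ ((h f hf).trans (by rw [coe_mul]; gcongr))) Q
  exact ⟨b x, by simpa only [← edist_eq_enorm_sub, edist_comm] using hx⟩

end Necessity

/-- the fractional maximal commutator `M_{b,α} : L^φ(ℝⁿ) → L^ψ(ℝⁿ)`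
is bounded if and only if `b ∈ BMO(ℝⁿ)`, and in that case
`‖M_{b,α}f‖_ψ ≤ C‖b‖_*‖f‖_φ`. -/
theorem statement13 {n : ℕ} (hn : 0 < n) (b : RSp n → ℝ)
    (hb : LocallyIntegrable b volume) (p q α r : ℝ)
    (φ ψ : RSp n → ℝ≥0 → ℝ≥0∞)
    (hp : 1 < p) (hpq : p ≤ q) (hα : α / (n : ℝ) = 1 / p - 1 / q)
    (hφ : IsWeakPhi Set.univ φ) (hψ : IsWeakPhi Set.univ ψ)
    (hinv : FracInvRel α φ ψ)
    (hr₁ : α / (n : ℝ) < r) (hr₂ : r ≤ 1 / p)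
    (ha0 : A0 Set.univ φ) (ha1 : A1 φ) (ha2 : A2 φ)
    (hainc : AInc p Set.univ φ) (hadec : ADec (1 / r) Set.univ φ) :
    ((∃ C : ℝ≥0, ∀ f : RSp n → ℝ, MemOrlicz φ Set.univ f →
      orliczNormE ψ Set.univ (fracMaximalComm α b f) ≤
        (C : ℝ≥0∞) * orliczNorm φ Set.univ f) ↔ IsBMO b) ∧
    (IsBMO b → ∃ C : ℝ≥0, ∀ f : RSp n → ℝ, MemOrlicz φ Set.univ f →
      orliczNormE ψ Set.univ (fracMaximalComm α b f) ≤
        (C : ℝ≥0∞) * bmoNorm b * orliczNorm φ Set.univ f) := by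
  have hγ : 0 ≤ α / n := by
    rw [hα, sub_nonneg]
    exact one_div_le_one_div_of_le (one_pos.trans hp) hpq
  obtain ⟨C, hC⟩ := exists_orliczNormE_fracMaximalComm_le hn.ne' hp hγ hr₁ hφ hψ hinv ha1 ha2
    hainc hadec
  refine ⟨⟨fun ⟨_, h⟩ => isBMO_of_orliczNormE_fracMaximalComm_le hφ hψ hinv ha1 ha2 hb h,
    fun h => ⟨C * (bmoNorm b).toNNReal, fun f hf => ?_⟩⟩, fun h => ⟨C, hC b h⟩⟩
  rw [ENNReal.coe_mul, ENNReal.coe_toNNReal h.2.ne]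
  exact hC b h f hf
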